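/- Let n ≥ 2 and let G be a finitely generated group admitting a surjective group homomorphism ρ : G → GL(n,ℤ). Then G has uniformly exponential growth, i.e., ω(G) > 1. -/

import Mathlib

open Filter

variable {G : Type*} [Group G]

noncomputable def wordLength (S : Set G) (g : G) : ℕ :=
  sInf {k | ∃ w : List G, w.length = k ∧ (∀ x ∈ w, x ∈ S ∨ x⁻¹ ∈ S) ∧ w.prod = g}

noncomputable def ballCard (S : Set G) (n : ℕ) : ℕ :=
  Set.ncard {g : G | wordLength S g ≤ n}

noncomputable def growthRate (S : Set G) : ℝ :=
  limUnder atTop (fun n : ℕ => (ballCard S n : ℝ) ^ ((n : ℝ)⁻¹))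

noncomputable def minGrowth (G : Type*) [Group G] : ℝ :=
  sInf {x : ℝ | ∃ S : Finset G, Subgroup.closure (S : Set G) = ⊤ ∧ growthRate (S : Set G) = x}

/-!
Say that `a` and `b` form a free pair if they freely generate a free semigroup. A free pair in the
ball of radius `ℓ` of a generating set `S` gives growth rate at least `2 ^ (1 / ℓ)`, so it suffices
to find free pairs at bounded distance from `1`, uniformly in `S`. Free pairs lift along `ρ`.

By strong approximation for `SL n`, the residues of four matrices `x 0, …, x 3` modulo four primes
can be prescribed independently. Modulo the `m`-th prime, let `x m` be a sufficiently generic matrix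
and let the other three be one and the same diagonal matrix. Then every short word which omits `x m`
reduces to a power of this diagonal matrix, and is hence in general position with respect to `x m`.
As this is visible in one finite quotient, such `x 0, …, x 3` exist in a ball of `S` of bounded
radius.

Among the short words which omit one of the letters, let `w` have the largest absolute trace `R`;
the residues ensure that `R ≥ n ^ 2`. The eigenvalues of `w` have product of modulus one and sum of
modulus `R`, so they split into two blocks whose moduli differ by a factor of at least
`R ^ (1 / (2 * n))`. Let `x m` be an omitted letter. The traces and determinants which witness
the general position of `w` and `x m` are nonzero integers, hence have modulus at least one, while
traces of short words are at most `R`. Therefore, for the action by left multiplication in a basis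
of words, the norms of the spectral projections of `w` and of the operators which quantify how
transversally `x m` moves its eigenspaces are bounded by a power of `R` with exponent depending only
on `n`. So a bounded power `w ^ K` outweighs all these constants by its spectral gap, and ping-pong
on cones shows that `w ^ K` and `x m * w ^ K` form a free pair.
-/

section WordBall

open scoped Pointwise

variable {H Q : Type*} [Group H] [Group Q] {S : Set H} {k l : ℕ} {g h : H}

/-- The ball of radius `k` about `1` in the Cayley graph of `H` with respect to `S`. -/
def wordBall (S : Set H) (k : ℕ) : Set H := (insert 1 (S ∪ S⁻¹)) ^ k

lemma one_mem_wordBall (S : Set H) (k : ℕ) : (1 : H) ∈ wordBall S k :=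
  Set.one_mem_pow (Set.mem_insert _ _)

lemma wordBall_mono (S : Set H) : Monotone (wordBall S) := fun _ _ hkl =>
  Set.pow_subset_pow_right (Set.mem_insert _ _) hkl

lemma mul_mem_wordBall_add (hg : g ∈ wordBall S k) (hh : h ∈ wordBall S l) :
    g * h ∈ wordBall S (k + l) := by
  rw [wordBall, pow_add]
  exact Set.mul_mem_mul hg hh

lemma pow_mem_wordBall_mul (hg : g ∈ wordBall S k) (m : ℕ) : g ^ m ∈ wordBall S (k * m) := by
  rw [wordBall, pow_mul]
  exact Set.pow_mem_pow hg

lemma list_prod_mem_wordBall {w : List H} (hw : ∀ g ∈ w, g ∈ wordBall S k) :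
    w.prod ∈ wordBall S (k * w.length) := by
  induction w with
  | nil => exact one_mem_wordBall S _
  | cons g w ih =>
    rw [List.prod_cons, List.length_cons, mul_add_one, add_comm]
    exact mul_mem_wordBall_add (hw g List.mem_cons_self)
      (ih fun h hh => hw h (List.mem_cons_of_mem g hh))

lemma mem_wordBall_iff_exists_list :
    g ∈ wordBall S k ↔ ∃ w : List H, w.length ≤ k ∧ (∀ x ∈ w, x ∈ S ∨ x⁻¹ ∈ S) ∧ w.prod = g := by
  constructor
  · induction k generalizing g with
    | zero => exact fun hg => ⟨[], by simp [Set.mem_one.1 hg]⟩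
    | succ k ih =>
      rw [wordBall, pow_succ, Set.mem_mul]
      rintro ⟨g', hg', h, hh, rfl⟩
      obtain ⟨w, hwk, hwS, rfl⟩ := ih hg'
      rcases hh with rfl | hh
      · exact ⟨w, by omega, hwS, (mul_one _).symm⟩
      · refine ⟨w ++ [h], by simpa using hwk, fun x hx => ?_, by simp⟩
        rcases List.mem_append.1 hx with hx | hx
        · exact hwS x hx
        · simpa [List.mem_singleton.1 hx] using hh
  · rintro ⟨w, hwk, hwS, rfl⟩
    have hw : w.prod ∈ wordBall S (1 * w.length) :=
      list_prod_mem_wordBall fun x hx => by simpa [wordBall] using Or.inr (hwS x hx)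
    exact wordBall_mono S (by simpa using hwk) hw

lemma exists_mem_wordBall (hg : g ∈ Subgroup.closure S) : ∃ k, g ∈ wordBall S k := by
  rw [← Subgroup.mem_toSubmonoid, Subgroup.closure_toSubmonoid] at hg
  obtain ⟨w, hwS, hwg⟩ := Submonoid.exists_list_of_mem_closure hg
  exact ⟨w.length, mem_wordBall_iff_exists_list.2 ⟨w, le_rfl, hwS, hwg⟩⟩

lemma wordLength_le_iff_mem_wordBall (hg : g ∈ Subgroup.closure S) :
    wordLength S g ≤ k ↔ g ∈ wordBall S k := by
  obtain ⟨_, hl⟩ := exists_mem_wordBall hg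
  obtain ⟨w, -, hwS, hwg⟩ := mem_wordBall_iff_exists_list.1 hl
  rw [mem_wordBall_iff_exists_list]
  constructor
  · intro hk
    obtain ⟨v, hv, hvS, hvg⟩ := Nat.sInf_mem
      (s := {k | ∃ w : List H, w.length = k ∧ (∀ x ∈ w, x ∈ S ∨ x⁻¹ ∈ S) ∧ w.prod = g})
      ⟨_, w, rfl, hwS, hwg⟩
    exact ⟨v, hv.trans_le hk, hvS, hvg⟩
  · rintro ⟨v, hvk, hvS, hvg⟩
    refine le_trans (Nat.sInf_le ?_) hvk
    exact ⟨v, rfl, hvS, hvg⟩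

lemma finite_wordBall (hS : S.Finite) (k : ℕ) : (wordBall S k).Finite := by
  induction k with
  | zero => exact Set.finite_one
  | succ k ih => exact ih.mul ((hS.union hS.inv).insert 1)

lemma image_wordBall (φ : H →* Q) (S : Set H) (k : ℕ) :
    φ '' wordBall S k = wordBall (φ '' S) k := by
  have hinv : φ '' S⁻¹ = (φ '' S)⁻¹ := Set.image_inv φ S
  rw [wordBall, Set.image_pow, Set.image_insert_eq, Set.image_union, hinv, map_one, wordBall]

lemma exists_forall_mem_wordBall_of_finite (Q : Type*) [Group Q] [Finite Q] :
    ∃ k, ∀ (T : Set Q), ∀ q ∈ Subgroup.closure T, q ∈ wordBall T k := by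
  have h : ∀ p : (T : Set Q) × Subgroup.closure T, ∃ k, (p.2 : Q) ∈ wordBall p.1 k :=
    fun p => exists_mem_wordBall p.2.2
  choose k hk using h
  obtain ⟨N, hN⟩ := (Set.finite_range k).bddAbove
  exact ⟨N, fun T q hq => wordBall_mono T (hN ⟨⟨T, q, hq⟩, rfl⟩) (hk ⟨T, q, hq⟩)⟩

lemma exists_forall_mem_wordBall_map_eq [Finite Q] (φ : H →* Q) :
    ∃ k, ∀ S : Set H, Subgroup.closure S = ⊤ → ∀ h : H, ∃ g ∈ wordBall S k, φ g = φ h := by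
  obtain ⟨k, hk⟩ := exists_forall_mem_wordBall_of_finite Q
  refine ⟨k, fun S hS h => ?_⟩
  have hh : φ h ∈ Subgroup.closure (φ '' S) := by
    rw [← MonoidHom.map_closure, hS]
    exact ⟨h, trivial, rfl⟩
  have hball := hk _ _ hh
  rwa [← image_wordBall] at hball

end WordBall

section Growth

variable {H H' : Type*}

/-- The elements `a` and `b` freely generate a free subsemigroup; for bounding growth from below
it is enough to compare words of equal length. -/
def IsFreePair [Monoid H] (a b : H) : Prop :=
  ∀ ⦃u v : List Bool⦄, u.length = v.length →
    (u.map fun c => bif c then a else b).prod = (v.map fun c => bif c then a else b).prod → u = v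

lemma IsFreePair.of_map [Monoid H] [Monoid H'] (f : H →* H') {a b : H}
    (h : IsFreePair (f a) (f b)) : IsFreePair a b := by
  intro u v huv hprod
  refine h huv ?_
  simpa only [map_list_prod, List.map_map, Function.comp_def, Bool.apply_cond f]
    using congrArg f hprod

lemma IsFreePair.of_isLeftRegular [Monoid H] {a b : H} (ha : IsLeftRegular a)
    (hb : IsLeftRegular b) {N : Submonoid H} (haN : a ∈ N) (hbN : b ∈ N)
    (hne : ∀ x ∈ N, ∀ y ∈ N, a * x ≠ b * y) : IsFreePair a b := by
  have hmem (l : List Bool) : (l.map fun c => bif c then a else b).prod ∈ N := by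
    refine list_prod_mem (List.forall_mem_map.2 fun c _ => ?_)
    cases c
    exacts [hbN, haN]
  intro u
  induction u with
  | nil => exact fun v hlen _ => (List.eq_nil_of_length_eq_zero hlen.symm).symm
  | cons c u ih =>
    rintro (_ | ⟨c', v⟩) hlen h
    · simp at hlen
    have hlen' : u.length = v.length := Nat.succ_injective hlen
    rw [List.map_cons, List.map_cons, List.prod_cons, List.prod_cons] at h
    cases c <;> cases c' <;> simp only [cond_true, cond_false] at h
    · rw [ih hlen' (hb h)]
    · exact absurd h.symm (hne _ (hmem v) _ (hmem u))
    · exact absurd h (hne _ (hmem u) _ (hmem v))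
    · rw [ih hlen' (ha h)]

variable [Group H] {S : Set H} {a b : H} {k : ℕ}

lemma ballCard_eq_ncard_wordBall (hS : Subgroup.closure S = ⊤) (k : ℕ) :
    ballCard S k = (wordBall S k).ncard := by
  have hk : {g | wordLength S g ≤ k} = wordBall S k :=
    Set.ext fun g => wordLength_le_iff_mem_wordBall (hS ▸ Subgroup.mem_top g)
  rw [ballCard, hk]

lemma ncard_wordBall_pos (hS : S.Finite) (k : ℕ) : 0 < (wordBall S k).ncard :=
  (Set.ncard_pos (finite_wordBall hS k)).2 ⟨1, one_mem_wordBall S k⟩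

open scoped Pointwise in
lemma ncard_wordBall_add_le (hS : S.Finite) (k l : ℕ) :
    (wordBall S (k + l)).ncard ≤ (wordBall S k).ncard * (wordBall S l).ncard := by
  have hadd : wordBall S (k + l) = wordBall S k * wordBall S l := pow_add _ k l
  rw [hadd, ← Set.image2_mul, ← Set.image_prod, ← Set.ncard_prod]
  exact Set.ncard_image_le ((finite_wordBall hS k).prod (finite_wordBall hS l))

lemma tendsto_growthRate (hfin : S.Finite) (hS : Subgroup.closure S = ⊤) :
    Tendsto (fun k : ℕ => (ballCard S k : ℝ) ^ (k : ℝ)⁻¹) atTop (nhds (growthRate S)) := by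
  have hpos (k : ℕ) : (0 : ℝ) < ballCard S k := by
    rw [ballCard_eq_ncard_wordBall hS]
    exact_mod_cast ncard_wordBall_pos hfin k
  have hsub : Subadditive fun k => Real.log (ballCard S k) := by
    intro k l
    rw [← Real.log_mul (hpos k).ne' (hpos l).ne']
    refine Real.log_le_log (hpos _) ?_
    simp only [ballCard_eq_ncard_wordBall hS]
    exact_mod_cast ncard_wordBall_add_le hfin k l
  have hlim := hsub.tendsto_lim ⟨0, by
    rintro _ ⟨k, rfl⟩
    exact div_nonneg (Real.log_natCast_nonneg _) k.cast_nonneg⟩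
  refine tendsto_nhds_limUnder ⟨Real.exp hsub.lim, ?_⟩
  refine ((Real.continuous_exp.tendsto _).comp hlim).congr fun k => ?_
  rw [Real.rpow_def_of_pos (hpos k), Function.comp_apply, div_eq_mul_inv]

lemma IsFreePair.two_pow_le_ncard_wordBall (h : IsFreePair a b) (hS : S.Finite)
    (ha : a ∈ wordBall S k) (hb : b ∈ wordBall S k) (m : ℕ) :
    2 ^ m ≤ (wordBall S (k * m)).ncard := by
  let F : List.Vector Bool m → H := fun v => (v.1.map fun c => bif c then a else b).prod
  have hF : Function.Injective F := fun u v huv => Subtype.ext (h (u.2.trans v.2.symm) huv)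
  have hball : Set.range F ⊆ wordBall S (k * m) := by
    rintro _ ⟨v, rfl⟩
    have hv : F v ∈ wordBall S (k * (v.1.map fun c => bif c then a else b).length) := by
      refine list_prod_mem_wordBall fun g hg => ?_
      obtain ⟨c, -, rfl⟩ := List.mem_map.1 hg
      cases c
      exacts [hb, ha]
    rwa [List.length_map, v.2] at hv
  calc 2 ^ m = (Set.range F).ncard := by
        rw [← Set.image_univ, Set.ncard_image_of_injective _ hF, Set.ncard_univ]
        simp
    _ ≤ (wordBall S (k * m)).ncard := Set.ncard_le_ncard hball (finite_wordBall hS _)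

lemma IsFreePair.two_rpow_inv_le_growthRate (h : IsFreePair a b) (hfin : S.Finite)
    (hS : Subgroup.closure S = ⊤) (hk : 0 < k) (ha : a ∈ wordBall S k) (hb : b ∈ wordBall S k) :
    (2 : ℝ) ^ (k : ℝ)⁻¹ ≤ growthRate S := by
  have hsubseq : Tendsto (fun m : ℕ => k * m) atTop atTop :=
    tendsto_id.const_mul_atTop' hk
  refine ge_of_tendsto ((tendsto_growthRate hfin hS).comp hsubseq) ?_
  filter_upwards [eventually_gt_atTop 0] with m hm
  have hcard : ((2 : ℝ) ^ m) ≤ ballCard S (k * m) := by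
    rw [ballCard_eq_ncard_wordBall hS]
    exact_mod_cast h.two_pow_le_ncard_wordBall hfin ha hb m
  calc (2 : ℝ) ^ (k : ℝ)⁻¹ = ((2 : ℝ) ^ m) ^ ((k * m : ℕ) : ℝ)⁻¹ := by
        rw [← Real.rpow_natCast, ← Real.rpow_mul zero_le_two]
        congr 1
        push_cast
        field_simp
    _ ≤ (ballCard S (k * m) : ℝ) ^ ((k * m : ℕ) : ℝ)⁻¹ := by gcongr

end Growth

section PingPong

open Module

section LinearMaps

variable {K V : Type*} [Field K] [AddCommGroup V] [Module K V] {E A D X Y : End K V}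
  {C₁ C₂ : Set V}

-- `E ∘ X` is injective on the finite-dimensional space `range E`, so it attains `u` there.
lemma mul_ne_mul_of_pingPong [FiniteDimensional K V] (hEE : IsIdempotentElem E)
    (hC₁ : ∀ v ∈ C₁, E v ≠ 0) (hX : ∀ v ≠ 0, E v = v → X v ∈ C₁)
    (hY : ∀ v ≠ 0, E v = v → Y v ∈ C₁)
    (hu : ∃ u ≠ 0, E u = u ∧ ∀ v ∈ C₁, E v = u → D v ∉ C₁) : Y ≠ D * X := by
  intro heq
  obtain ⟨u, hu0, hEu, hu⟩ := hu
  have hfix (v : LinearMap.range E) : E v = v := by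
    obtain ⟨_, v, rfl⟩ := v
    exact LinearMap.congr_fun hEE v
  let Z : End K (LinearMap.range E) := (E * X).restrict fun v _ => ⟨X v, rfl⟩
  have hZ : Function.Surjective Z := by
    refine LinearMap.surjective_of_injective ((injective_iff_map_eq_zero Z).2 fun v hv => ?_)
    by_contra hv0
    exact hC₁ _ (hX v (by simpa using hv0) (hfix v)) (congrArg Subtype.val hv)
  obtain ⟨v, hv⟩ := hZ ⟨u, u, hEu⟩
  have hXv : E (X v) = u := congrArg Subtype.val hv
  have hv0 : (v : V) ≠ 0 := fun h0 => hu0 (by rw [← hXv, h0, map_zero, map_zero])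
  have hDX : D (X v) = Y v := (LinearMap.congr_fun heq v).symm
  refine hu (X v) (hX v hv0 (hfix v)) hXv ?_
  rw [hDX]
  exact hY v hv0 (hfix v)

lemma isLeftRegular_of_injective (hA : Function.Injective A) : IsLeftRegular A := fun _ _ h =>
  LinearMap.ext fun v => hA (LinearMap.congr_fun h v)

lemma IsFreePair.of_pingPong [FiniteDimensional K V] (hEE : IsIdempotentElem E)
    (hA : Function.Injective A) (hD : Function.Injective D) (hC : C₁ ⊆ C₂)
    (hC₁ : ∀ v ∈ C₁, E v ≠ 0) (hE : ∀ v ≠ 0, E v = v → v ∈ C₁) (hAC : Set.MapsTo A C₂ C₁)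
    (hDC : Set.MapsTo D C₁ C₂) (hu : ∃ u ≠ 0, E u = u ∧ ∀ v ∈ C₁, E v = u → D v ∉ C₁) :
    IsFreePair A (D * A) := by
  let N : Submonoid (End K V) :=
    { carrier := {X | Set.MapsTo X C₂ C₂}
      one_mem' := Set.mapsTo_id C₂
      mul_mem' := fun hX hY => hX.comp hY }
  have hAN : ∀ X ∈ N, ∀ v ≠ 0, E v = v → (A * X) v ∈ C₁ := fun X hX v hv0 hv =>
    hAC (hX (hC (hE v hv0 hv)))
  refine .of_isLeftRegular (isLeftRegular_of_injective hA)
    (isLeftRegular_of_injective (hD.comp hA)) (N := N) (fun v hv => hC (hAC hv))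
    (fun v hv => hDC (hAC hv)) fun X hX Y hY => ?_
  rw [mul_assoc]
  exact mul_ne_mul_of_pingPong hEE hC₁ (hAN Y hY) (hAN X hX) hu

end LinearMaps

variable {𝕜 V : Type*} [NontriviallyNormedField 𝕜] [NormedAddCommGroup V] [NormedSpace 𝕜 V]
  {E A D : V →L[𝕜] V} {M c : ℝ} {u v : V}

/-- The cone of opening `c` around the range of a projection `E`, in the direction of the kernel
of `E`. -/
def projCone (E : V →L[𝕜] V) (c : ℝ) : Set V := {v | E v ≠ 0 ∧ ‖v - E v‖ ≤ c * ‖E v‖}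

lemma projCone_mono (E : V →L[𝕜] V) : Monotone (projCone E) := fun _ _ hcd _ hv =>
  ⟨hv.1, hv.2.trans (by gcongr)⟩

lemma mapsTo_projCone_of_gap {c d : ℝ} (hd : 0 < d)
    (hA0 : ∀ v, E v ≠ 0 → E (A v) ≠ 0)
    (hA : ∀ v, d * (‖A v - E (A v)‖ * ‖E v‖) ≤ ‖E (A v)‖ * ‖v - E v‖) :
    Set.MapsTo A (projCone E c) (projCone E (c / d)) := by
  rintro v ⟨hv, hvc⟩
  refine ⟨hA0 v hv, ?_⟩
  have hv' : 0 < ‖E v‖ := norm_pos_iff.2 hv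
  rw [div_mul_eq_mul_div, le_div_iff₀ hd]
  refine le_of_mul_le_mul_right ?_ hv'
  calc ‖A v - E (A v)‖ * d * ‖E v‖ = d * (‖A v - E (A v)‖ * ‖E v‖) := by ring
    _ ≤ ‖E (A v)‖ * ‖v - E v‖ := hA v
    _ ≤ ‖E (A v)‖ * (c * ‖E v‖) := by gcongr
    _ = c * ‖E (A v)‖ * ‖E v‖ := by ring

lemma norm_le_of_mem_projCone (hM : 1 ≤ M) (hv : v ∈ projCone E (1 / (4 * M ^ 3))) :
    ‖v‖ ≤ 2 * ‖E v‖ :=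
  calc ‖v‖ = ‖E v + (v - E v)‖ := by rw [add_sub_cancel]
    _ ≤ ‖E v‖ + 1 / (4 * M ^ 3) * ‖E v‖ := norm_add_le_of_le le_rfl hv.2
    _ ≤ ‖E v‖ + 1 * ‖E v‖ := by
      gcongr
      rw [div_le_one (by positivity)]
      linarith [one_le_pow₀ hM (n := 3)]
    _ = 2 * ‖E v‖ := by ring

lemma norm_apply_apply_le (hE : ‖E‖ ≤ M) (hD : ‖D‖ ≤ M) (v : V) :
    ‖E (D v)‖ ≤ M ^ 2 * ‖v‖ := by
  have : 0 ≤ M := (norm_nonneg E).trans hE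
  calc ‖E (D v)‖ ≤ M * (M * ‖v‖) := E.le_of_opNorm_le_of_le hE (D.le_of_opNorm_le hD v)
    _ = M ^ 2 * ‖v‖ := by ring

lemma mapsTo_projCone_of_lower_bound (hM : 1 ≤ M) (hE : ‖E‖ ≤ M) (hE' : ‖1 - E‖ ≤ M)
    (hD : ‖D‖ ≤ M) (hEE : IsIdempotentElem E) (hED : ∀ v, E v = v → ‖v‖ ≤ M * ‖E (D v)‖) :
    Set.MapsTo D (projCone E (1 / (4 * M ^ 3))) (projCone E (4 * M ^ 3)) := by
  rintro v ⟨hv, hvc⟩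
  have : 0 < ‖E v‖ := norm_pos_iff.2 hv
  have hker : ‖E (D (v - E v))‖ ≤ ‖E v‖ / (4 * M) :=
    calc ‖E (D (v - E v))‖ ≤ M ^ 2 * (1 / (4 * M ^ 3) * ‖E v‖) :=
          (norm_apply_apply_le hE hD _).trans (by gcongr)
      _ = ‖E v‖ / (4 * M) := by field_simp
  have hrange : ‖E v‖ / M ≤ ‖E (D (E v))‖ :=
    (div_le_iff₀' (by positivity)).2 (hED _ (DFunLike.congr_fun hEE v))
  have hlower : 3 / (4 * M) * ‖E v‖ ≤ ‖E (D v)‖ :=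
    calc 3 / (4 * M) * ‖E v‖ = ‖E v‖ / M - ‖E v‖ / (4 * M) := by field_simp; ring
      _ ≤ ‖E (D (E v))‖ - ‖E (D (v - E v))‖ := by gcongr
      _ ≤ ‖E (D (E v)) + E (D (v - E v))‖ := norm_sub_le_norm_add _ _
      _ = ‖E (D v)‖ := by rw [← map_add, ← map_add, add_sub_cancel]
  refine ⟨fun h0 => ?_, ?_⟩
  · rw [h0, norm_zero] at hlower
    exact hlower.not_gt (by positivity)
  · calc ‖D v - E (D v)‖ ≤ M ^ 2 * ‖v‖ := norm_apply_apply_le hE' hD v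
      _ ≤ M ^ 2 * (2 * ‖E v‖) := by gcongr; exact norm_le_of_mem_projCone hM ⟨hv, hvc⟩
      _ = 8 / 3 * M ^ 3 * (3 / (4 * M) * ‖E v‖) := by field_simp; ring
      _ ≤ 4 * M ^ 3 * ‖E (D v)‖ := by gcongr; norm_num

lemma notMem_projCone_of_lower_bound (hM : 1 ≤ M) (hE : ‖E‖ ≤ M) (hE' : ‖1 - E‖ ≤ M)
    (hD : ‖D‖ ≤ M) (hu : u ≠ 0) (hDu : ‖u‖ ≤ M * ‖D u - E (D u)‖)
    (hv : v ∈ projCone E (1 / (4 * M ^ 3))) (hvu : E v = u) :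
    D v ∉ projCone E (1 / (4 * M ^ 3)) := by
  subst hvu
  rintro ⟨-, hDv⟩
  have : 0 < ‖E v‖ := norm_pos_iff.2 hu
  have hker : ‖D (v - E v) - E (D (v - E v))‖ ≤ ‖E v‖ / (4 * M) :=
    calc ‖D (v - E v) - E (D (v - E v))‖ ≤ M ^ 2 * (1 / (4 * M ^ 3) * ‖E v‖) :=
          (norm_apply_apply_le hE' hD _).trans (by gcongr; exact hv.2)
      _ = ‖E v‖ / (4 * M) := by field_simp
  have hlower : 3 / (4 * M) * ‖E v‖ ≤ ‖D v - E (D v)‖ :=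
    calc 3 / (4 * M) * ‖E v‖ = ‖E v‖ / M - ‖E v‖ / (4 * M) := by field_simp; ring
      _ ≤ ‖D (E v) - E (D (E v))‖ - ‖D (v - E v) - E (D (v - E v))‖ := by
        gcongr
        exact (div_le_iff₀' (by positivity)).2 hDu
      _ ≤ ‖(D (E v) - E (D (E v))) + (D (v - E v) - E (D (v - E v)))‖ := norm_sub_le_norm_add _ _
      _ = ‖D v - E (D v)‖ := by
        congr 1
        simp only [map_sub]
        abel
  have hupper : ‖D v - E (D v)‖ ≤ 1 / (2 * M) * ‖E v‖ :=
    calc ‖D v - E (D v)‖ ≤ 1 / (4 * M ^ 3) * ‖E (D v)‖ := hDv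
      _ ≤ 1 / (4 * M ^ 3) * (M ^ 2 * (2 * ‖E v‖)) := by
        gcongr
        exact (norm_apply_apply_le hE hD v).trans (by gcongr; exact norm_le_of_mem_projCone hM hv)
      _ = 1 / (2 * M) * ‖E v‖ := by field_simp; ring
  have hlt : 1 / (2 * M) * ‖E v‖ < 3 / (4 * M) * ‖E v‖ := by
    gcongr ?_ * _
    rw [div_lt_div_iff₀ (by positivity) (by positivity)]
    linarith
  exact (hlower.trans hupper).not_gt hlt

lemma IsFreePair.of_gap [FiniteDimensional 𝕜 V] (hM : 1 ≤ M) (hE : ‖E‖ ≤ M) (hE' : ‖1 - E‖ ≤ M)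
    (hD : ‖D‖ ≤ M) (hEE : IsIdempotentElem E) (hED : ∀ v, E v = v → ‖v‖ ≤ M * ‖E (D v)‖)
    (hu : ∃ u, u ≠ 0 ∧ E u = u ∧ ‖u‖ ≤ M * ‖D u - E (D u)‖) (hA0 : ∀ v, E v ≠ 0 → E (A v) ≠ 0)
    (hgap : ∀ v, 16 * M ^ 6 * (‖A v - E (A v)‖ * ‖E v‖) ≤ ‖E (A v)‖ * ‖v - E v‖)
    (hAinj : Function.Injective A) (hDinj : Function.Injective D) :
    IsFreePair A (D * A) := by
  have hAC := mapsTo_projCone_of_gap (c := 4 * M ^ 3) (by positivity) hA0 hgap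
  have hconst : 4 * M ^ 3 / (16 * M ^ 6) = 1 / (4 * M ^ 3) := by field_simp; norm_num
  have hle : 1 / (4 * M ^ 3) ≤ 4 * M ^ 3 := by
    have hM3 : 1 ≤ M ^ 3 := one_le_pow₀ hM
    rw [div_le_iff₀ (by positivity)]
    nlinarith
  rw [hconst] at hAC
  obtain ⟨u, hu0, hEu, hDu⟩ := hu
  refine .of_map (ContinuousLinearMap.toLinearMapRingHom : (V →L[𝕜] V) →+* End 𝕜 V).toMonoidHom
    (.of_pingPong (C₁ := projCone E (1 / (4 * M ^ 3))) (C₂ := projCone E (4 * M ^ 3))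
      (E := E) (LinearMap.ext fun v => DFunLike.congr_fun hEE v) hAinj hDinj (projCone_mono E hle)
      (fun v hv => hv.1) (fun v hv0 hv => ?_) hAC
      (mapsTo_projCone_of_lower_bound hM hE hE' hD hEE hED) ⟨u, hu0, hEu, fun v hv hvu => ?_⟩)
  · have hv : E v = v := hv
    exact ⟨hv.symm ▸ hv0, by rw [hv, sub_self, norm_zero]; positivity⟩
  · exact notMem_projCone_of_lower_bound hM hE hE' hD hu0 hDu hv hvu

end PingPong

section Eigenprojections

variable {𝕜 V ι : Type*} [NontriviallyNormedField 𝕜] [NormedAddCommGroup V] [NormedSpace 𝕜 V]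
  [Fintype ι] {e : ι → V →L[𝕜] V} {B : V →L[𝕜] V} {μ : ι → 𝕜} {T : Finset ι} {M d : ℝ}

lemma apply_sub_sum_eq_sum_compl [DecidableEq ι] (he : CompleteOrthogonalIdempotents e)
    (T : Finset ι) (v : V) :
    v - (∑ k ∈ T, e k) v = ∑ j ∈ Tᶜ, e j v := by
  rw [sub_eq_iff_eq_add', sum_apply, Finset.sum_add_sum_compl, ← sum_apply, he.complete,
    one_apply_eq_self]

lemma norm_apply_sub_sum_le_of_eigenprojections (he : CompleteOrthogonalIdempotents e)
    (heM : ∀ j, ‖e j‖ ≤ M) (hB : ∀ j, e j * B = μ j • e j) [DecidableEq ι] (T : Finset ι) (v : V) :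
    ‖B v - (∑ k ∈ T, e k) (B v)‖ ≤ ∑ j ∈ Tᶜ, ‖μ j‖ * (M * ‖v - (∑ k ∈ T, e k) v‖) := by
  rw [apply_sub_sum_eq_sum_compl he]
  refine norm_sum_le_of_le _ fun j hj => ?_
  have hej : e j ((∑ k ∈ T, e k) v) = 0 :=
    DFunLike.congr_fun (he.mul_sum_of_notMem (by simpa using hj)) v
  calc ‖e j (B v)‖ = ‖μ j‖ * ‖e j (v - (∑ k ∈ T, e k) v)‖ := by
        rw [map_sub, hej, sub_zero, ← norm_smul]
        exact congrArg norm (DFunLike.congr_fun (hB j) v)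
    _ ≤ ‖μ j‖ * (M * ‖v - (∑ k ∈ T, e k) v‖) := by
        gcongr
        exact (e j).le_of_opNorm_le (heM j) _

lemma norm_sum_apply_le_of_eigenprojections (he : CompleteOrthogonalIdempotents e)
    (heM : ∀ j, ‖e j‖ ≤ M) (hB : ∀ j, e j * B = μ j • e j) (hμ : ∀ k ∈ T, μ k ≠ 0) (v : V) :
    ‖(∑ k ∈ T, e k) v‖ ≤ ∑ k ∈ T, ‖μ k‖⁻¹ * (M * ‖(∑ k ∈ T, e k) (B v)‖) := by
  rw [sum_apply]
  refine norm_sum_le_of_le _ fun k hk => ?_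
  have hek : e k ((∑ k ∈ T, e k) (B v)) = μ k • e k v :=
    (DFunLike.congr_fun (he.mul_sum_of_mem hk) (B v)).trans (DFunLike.congr_fun (hB k) v)
  calc ‖e k v‖ = ‖μ k‖⁻¹ * ‖e k ((∑ k ∈ T, e k) (B v))‖ := by
        rw [hek, ← norm_inv, ← norm_smul, inv_smul_smul₀ (hμ k hk)]
    _ ≤ ‖μ k‖⁻¹ * (M * ‖(∑ k ∈ T, e k) (B v)‖) := by
        gcongr
        exact (e k).le_of_opNorm_le (heM k) _

lemma gap_of_eigenprojections (he : CompleteOrthogonalIdempotents e) (heM : ∀ j, ‖e j‖ ≤ M)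
    (hB : ∀ j, e j * B = μ j • e j) (hμ : ∀ k ∈ T, μ k ≠ 0)
    (hd : ∀ j ∉ T, ∀ k ∈ T, d * ‖μ j‖ ≤ ‖μ k‖) (hd0 : 0 ≤ d) (v : V) :
    d * (‖B v - (∑ k ∈ T, e k) (B v)‖ * ‖(∑ k ∈ T, e k) v‖) ≤
      (Fintype.card ι * M) ^ 2 * (‖(∑ k ∈ T, e k) (B v)‖ * ‖v - (∑ k ∈ T, e k) v‖) := by
  classical
  set E := ∑ k ∈ T, e k
  have hupper : ‖B v - E (B v)‖ ≤ ∑ j ∈ Tᶜ, ‖μ j‖ * (M * ‖v - E v‖) :=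
    norm_apply_sub_sum_le_of_eigenprojections he heM hB T v
  have hlower : ‖E v‖ ≤ ∑ k ∈ T, ‖μ k‖⁻¹ * (M * ‖E (B v)‖) :=
    norm_sum_apply_le_of_eigenprojections he heM hB hμ v
  calc d * (‖B v - E (B v)‖ * ‖E v‖)
      ≤ d * ((∑ j ∈ Tᶜ, ‖μ j‖ * (M * ‖v - E v‖)) * ∑ k ∈ T, ‖μ k‖⁻¹ * (M * ‖E (B v)‖)) := by
        gcongr
        exact (norm_nonneg _).trans hupper
    _ = ∑ j ∈ Tᶜ, ∑ k ∈ T, d * ‖μ j‖ / ‖μ k‖ * (M ^ 2 * (‖E (B v)‖ * ‖v - E v‖)) := by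
        rw [Finset.sum_mul_sum, Finset.mul_sum]
        refine Finset.sum_congr rfl fun j _ => ?_
        rw [Finset.mul_sum]
        exact Finset.sum_congr rfl fun k _ => by ring
    _ ≤ ∑ j ∈ Tᶜ, ∑ k ∈ T, M ^ 2 * (‖E (B v)‖ * ‖v - E v‖) := by
        refine Finset.sum_le_sum fun j hj => Finset.sum_le_sum fun k hk => ?_
        refine mul_le_of_le_one_left (by positivity) (div_le_one_of_le₀ ?_ (norm_nonneg _))
        exact hd j (by simpa using hj) k hk
    _ = (Tᶜ.card * T.card : ℝ) * (M ^ 2 * (‖E (B v)‖ * ‖v - E v‖)) := by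
        simp only [Finset.sum_const, nsmul_eq_mul, mul_assoc]
    _ ≤ (Fintype.card ι * Fintype.card ι : ℝ) * (M ^ 2 * (‖E (B v)‖ * ‖v - E v‖)) := by
        gcongr <;> exact Finset.card_le_univ _
    _ = (Fintype.card ι * M) ^ 2 * (‖E (B v)‖ * ‖v - E v‖) := by ring

lemma sum_apply_ne_zero_of_eigenprojections (he : CompleteOrthogonalIdempotents e)
    (hB : ∀ j, e j * B = μ j • e j) (hμ : ∀ k ∈ T, μ k ≠ 0) {v : V}
    (hv : (∑ k ∈ T, e k) v ≠ 0) : (∑ k ∈ T, e k) (B v) ≠ 0 := by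
  refine fun h0 => hv ?_
  rw [sum_apply]
  refine Finset.sum_eq_zero fun k hk => ?_
  have hk' : μ k • e k v = 0 :=
    calc μ k • e k v = e k (B v) := (DFunLike.congr_fun (hB k) v).symm
      _ = e k ((∑ k ∈ T, e k) (B v)) := (DFunLike.congr_fun (he.mul_sum_of_mem hk) (B v)).symm
      _ = 0 := by rw [h0, map_zero]
  exact (smul_eq_zero_iff_right (hμ k hk)).1 hk'

lemma mul_pow_eq_pow_smul {S Λ : Type*} [CommSemiring S] [Semiring Λ] [Algebra S Λ] {x y : Λ}
    {s : S} (h : x * y = s • x) (N : ℕ) : x * y ^ N = s ^ N • x := by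
  induction N with
  | zero => rw [pow_zero, pow_zero, mul_one, one_smul]
  | succ N ih => rw [pow_succ, ← mul_assoc, ih, smul_mul_assoc, h, smul_smul, ← pow_succ]

lemma gap_pow_of_eigenprojections [Nonempty ι] (he : CompleteOrthogonalIdempotents e)
    (heM : ∀ j, ‖e j‖ ≤ M) (hB : ∀ j, e j * B = μ j • e j) (hμ : ∀ k ∈ T, μ k ≠ 0) {r c : ℝ}
    {m L : ℕ} (hr : 0 ≤ r) (hgap : ∀ j ∉ T, ∀ k ∈ T, r * ‖μ j‖ ^ m ≤ ‖μ k‖ ^ m) (hM : 0 < M)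
    (hc : c * (Fintype.card ι * M) ^ 2 ≤ r ^ L) (v : V) :
    c * (‖(B ^ (m * L)) v - (∑ k ∈ T, e k) ((B ^ (m * L)) v)‖ * ‖(∑ k ∈ T, e k) v‖) ≤
      ‖(∑ k ∈ T, e k) ((B ^ (m * L)) v)‖ * ‖v - (∑ k ∈ T, e k) v‖ := by
  have hd : ∀ j ∉ T, ∀ k ∈ T, r ^ L * ‖μ j ^ (m * L)‖ ≤ ‖μ k ^ (m * L)‖ := by
    intro j hj k hk
    rw [norm_pow, norm_pow, pow_mul, pow_mul, ← mul_pow]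
    gcongr
    exact hgap j hj k hk
  have hmain := gap_of_eigenprojections he heM (fun j => mul_pow_eq_pow_smul (hB j) (m * L))
    (fun k hk => pow_ne_zero _ (hμ k hk)) hd (pow_nonneg hr L) v
  refine le_of_mul_le_mul_left ((le_of_eq ?_).trans <|
    (mul_le_mul_of_nonneg_right hc (by positivity)).trans hmain) (by positivity)
  ring

end Eigenprojections

section Certificates

open Matrix

variable {R R' : Type*} [CommRing R] [CommRing R'] {n : ℕ}

/-- The determinant of the `N × N` Hankel matrix of a sequence. -/
def hankelDet (N : ℕ) (f : ℕ → R) : R :=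
  det (of fun a b : Fin N => f (a + b))

/-- The discriminant of the characteristic polynomial of `A`, expressed through power traces. -/
def traceDet (A : Matrix (Fin n) (Fin n) R) : R :=
  hankelDet n fun a => trace (A ^ a)

/-- The Gram determinant, for the trace form, of the `n ^ 2` matrices `A ^ a * D * A ^ b`. -/
def gramDet (A D : Matrix (Fin n) (Fin n) R) : R :=
  det (of fun p q : Fin n × Fin n =>
    trace (A ^ (p.1 + q.1 : ℕ) * D * A ^ (p.2 + q.2 : ℕ) * D))

/-- Up to a Vandermonde factor, the product of the principal `k × k` minors of `D` in an eigenbasis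
of `A`, expressed through coefficients of characteristic polynomials. -/
noncomputable def minorDet (k : ℕ) (A D : Matrix (Fin n) (Fin n) R) : R :=
  hankelDet (n.choose k) fun a => (A ^ a * D).charpoly.coeff (n - k)

/-- `D` is in general position with respect to the eigenbasis of `A`: the eigenvalues of `A` are
distinct, and in the eigenbasis `D` has no zero entry and no zero principal minor. All three
conditions are the nonvanishing of conjugation-invariant integral polynomials in `A` and `D`. -/
structure GeneralPosition (A D : Matrix (Fin n) (Fin n) R) : Prop where
  traceDet_ne_zero : traceDet A ≠ 0
  gramDet_ne_zero : gramDet A D ≠ 0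
  minorDet_ne_zero {k : ℕ} (hk : k ≤ n) : minorDet k A D ≠ 0

lemma hankelDet_map (φ : R →+* R') (N : ℕ) (f : ℕ → R) :
    hankelDet N (fun a => φ (f a)) = φ (hankelDet N f) :=
  (φ.map_det _).symm

lemma hankelDet_sum_pow {N : ℕ} (μ c : Fin N → R) :
    hankelDet N (fun a => ∑ j, μ j ^ a * c j) = det (vandermonde μ) ^ 2 * ∏ j, c j := by
  have hfactor : (of fun a b : Fin N => ∑ j, μ j ^ (a + b : ℕ) * c j) =
      (vandermonde μ)ᵀ * diagonal c * vandermonde μ := by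
    ext a b
    rw [mul_apply]
    simp only [of_apply, mul_diagonal, transpose_apply, vandermonde_apply, pow_add]
    exact Finset.sum_congr rfl fun j _ => by ring
  rw [hankelDet, hfactor, det_mul, det_mul, det_diagonal, det_transpose]
  ring

lemma trace_map_pow_mul (φ : R →+* R') (A D : Matrix (Fin n) (Fin n) R) (a b : ℕ) :
    trace (A.map φ ^ a * D.map φ * A.map φ ^ b * D.map φ) =
      φ (trace (A ^ a * D * A ^ b * D)) := by
  simp only [← RingHom.mapMatrix_apply, ← map_pow, ← map_mul]
  exact (AddMonoidHom.map_trace φ _).symm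

lemma traceDet_map (φ : R →+* R') (A : Matrix (Fin n) (Fin n) R) :
    traceDet (A.map φ) = φ (traceDet A) := by
  rw [traceDet, traceDet, ← hankelDet_map]
  congr! 2 with a
  rw [← RingHom.mapMatrix_apply, ← map_pow]
  exact (AddMonoidHom.map_trace φ _).symm

lemma gramDet_map (φ : R →+* R') (A D : Matrix (Fin n) (Fin n) R) :
    gramDet (A.map φ) (D.map φ) = φ (gramDet A D) := by
  simp only [gramDet, φ.map_det, trace_map_pow_mul]
  rfl

lemma minorDet_map (φ : R →+* R') (k : ℕ) (A D : Matrix (Fin n) (Fin n) R) :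
    minorDet k (A.map φ) (D.map φ) = φ (minorDet k A D) := by
  rw [minorDet, minorDet, ← hankelDet_map]
  congr! 2 with a
  rw [← Polynomial.coeff_map, ← Matrix.charpoly_map]
  simp only [← RingHom.mapMatrix_apply, map_pow, map_mul]

lemma GeneralPosition.of_map (φ : R →+* R') {A D : Matrix (Fin n) (Fin n) R}
    (h : GeneralPosition (A.map φ) (D.map φ)) : GeneralPosition A D where
  traceDet_ne_zero h0 := h.traceDet_ne_zero (by rw [traceDet_map, h0, map_zero])
  gramDet_ne_zero h0 := h.gramDet_ne_zero (by rw [gramDet_map, h0, map_zero])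
  minorDet_ne_zero hk h0 := h.minorDet_ne_zero hk (by rw [minorDet_map, h0, map_zero])

section Conjugation

variable (P : (Matrix (Fin n) (Fin n) R)ˣ) (A D : Matrix (Fin n) (Fin n) R)

lemma traceDet_units_conj : traceDet (P.val * A * P⁻¹.val) = traceDet A := by
  simp only [traceDet, Units.conj_pow, Matrix.trace_units_conj]

lemma gramDet_units_conj :
    gramDet (P.val * A * P⁻¹.val) (P.val * D * P⁻¹.val) = gramDet A D := by
  have hmul (X Y : Matrix (Fin n) (Fin n) R) :
      P.val * X * P⁻¹.val * (P.val * Y * P⁻¹.val) = P.val * (X * Y) * P⁻¹.val := by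
    simp only [mul_assoc, Units.inv_mul_cancel_left]
  simp only [gramDet, Units.conj_pow, hmul, Matrix.trace_units_conj]

lemma minorDet_units_conj (k : ℕ) :
    minorDet k (P.val * A * P⁻¹.val) (P.val * D * P⁻¹.val) = minorDet k A D := by
  have hconj (a : ℕ) : (P.val * A * P⁻¹.val) ^ a * (P.val * D * P⁻¹.val) =
      P.val * (A ^ a * D) * P.val⁻¹ := by
    rw [Units.conj_pow, ← coe_units_inv]
    simp only [mul_assoc, Units.inv_mul_cancel_left]
  simp only [minorDet, hconj, Matrix.charpoly_units_conj]

end Conjugation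

lemma traceDet_diagonal (l : Fin n → R) : traceDet (diagonal l) = det (vandermonde l) ^ 2 := by
  simpa [traceDet, diagonal_pow, trace_diagonal] using hankelDet_sum_pow l 1

lemma trace_diagonal_pow_mul (l : Fin n → R) (D : Matrix (Fin n) (Fin n) R) (a b : ℕ) :
    trace (diagonal l ^ a * D * diagonal l ^ b * D) =
      ∑ p : Fin n × Fin n, l p.1 ^ a * l p.2 ^ b * (D p.1 p.2 * D p.2 p.1) := by
  have hentry (a : ℕ) (i j : Fin n) : (diagonal l ^ a * D) i j = l i ^ a * D i j := by
    rw [diagonal_pow, diagonal_mul, Pi.pow_apply]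
  rw [mul_assoc _ (diagonal l ^ b) D, Fintype.sum_prod_type, trace]
  simp only [diag_apply, mul_apply (M := _ * _) (N := _ * _), hentry]
  exact Finset.sum_congr rfl fun i _ => Finset.sum_congr rfl fun j _ => by ring

open scoped Kronecker in
lemma gramDet_diagonal (l : Fin n → R) (D : Matrix (Fin n) (Fin n) R) :
    gramDet (diagonal l) D = det (vandermonde l) ^ (4 * n) *
      ∏ p : Fin n × Fin n, D p.1 p.2 * D p.2 p.1 := by
  have hfactor : (of fun p q : Fin n × Fin n =>
      trace (diagonal l ^ (p.1 + q.1 : ℕ) * D * diagonal l ^ (p.2 + q.2 : ℕ) * D)) =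
      (vandermonde l ⊗ₖ vandermonde l)ᵀ * diagonal (fun p => D p.1 p.2 * D p.2 p.1) *
        (vandermonde l ⊗ₖ vandermonde l) := by
    ext p q
    rw [of_apply, trace_diagonal_pow_mul, mul_apply]
    simp only [mul_diagonal, transpose_apply, kroneckerMap_apply, vandermonde_apply, pow_add]
    exact Finset.sum_congr rfl fun j _ => by ring
  rw [gramDet, hfactor, det_mul, det_mul, det_diagonal, det_transpose, det_kronecker,
    Fintype.card_fin]
  ring

lemma charpoly_coeff_diagonal_pow_mul {k : ℕ} (hk : k ≤ n) (l : Fin n → R)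
    (D : Matrix (Fin n) (Fin n) R) (a : ℕ) :
    (diagonal l ^ a * D).charpoly.coeff (n - k) =
      ∑ s ∈ Finset.univ.powersetCard k, (∏ i ∈ s, l i) ^ a *
        ((-1) ^ k * (D.submatrix (Subtype.val : s → Fin n) Subtype.val).det) := by
  have hminor (s : Finset (Fin n)) :
      (diagonal l ^ a * D).submatrix (Subtype.val : s → Fin n) Subtype.val =
        diagonal (fun i : s => l i ^ a) * D.submatrix Subtype.val Subtype.val := by
    ext i j
    simp [diagonal_pow, diagonal_mul]
  have hsum := charpoly_coeff_eq_sum_minors (diagonal l ^ a * D) k (by simpa using hk)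
  rw [Fintype.card_fin] at hsum
  rw [hsum, Finset.mul_sum]
  refine Finset.sum_congr rfl fun s _ => ?_
  rw [hminor, det_mul, det_diagonal, Finset.prod_pow, Finset.prod_coe_sort s l]
  ring

lemma minorDet_diagonal {k : ℕ} (hk : k ≤ n) (l : Fin n → R) (D : Matrix (Fin n) (Fin n) R)
    (e : Fin (n.choose k) ≃ (Finset.univ.powersetCard k : Finset (Finset (Fin n)))) :
    minorDet k (diagonal l) D = det (vandermonde fun j => ∏ i ∈ (e j).1, l i) ^ 2 *
      ∏ j, (-1) ^ k * (D.submatrix (Subtype.val : (e j).1 → Fin n) Subtype.val).det := by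
  rw [← hankelDet_sum_pow, minorDet]
  congr! 2 with a
  rw [charpoly_coeff_diagonal_pow_mul hk, ← Finset.sum_coe_sort, ← e.sum_comp]

lemma nonempty_equiv_powersetCard (n k : ℕ) :
    Nonempty (Fin (n.choose k) ≃ (Finset.univ.powersetCard k : Finset (Finset (Fin n)))) :=
  ⟨(Finset.equivFinOfCardEq (by simp)).symm⟩

lemma GeneralPosition.of_diagonal {K : Type*} [Field K] {l : Fin n → K}
    {D : Matrix (Fin n) (Fin n) K}
    (hl : ∀ s t : Finset (Fin n), s.card = t.card → ∏ i ∈ s, l i = ∏ i ∈ t, l i → s = t)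
    (hD : ∀ i j, D i j ≠ 0)
    (hminor : ∀ s : Finset (Fin n),
      (D.submatrix (Subtype.val : s → Fin n) Subtype.val).det ≠ 0) :
    GeneralPosition (diagonal l) D := by
  have hvand : det (vandermonde l) ≠ 0 := det_vandermonde_ne_zero_iff.2 fun i j hij =>
    Finset.singleton_injective (hl _ _ (by simp) (by simpa using hij))
  refine ⟨?_, ?_, fun {k} hk => ?_⟩
  · rw [traceDet_diagonal]
    exact pow_ne_zero _ hvand
  · rw [gramDet_diagonal]
    exact mul_ne_zero (pow_ne_zero _ hvand)
      (Finset.prod_ne_zero_iff.2 fun p _ => mul_ne_zero (hD _ _) (hD _ _))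
  · obtain ⟨e⟩ := nonempty_equiv_powersetCard n k
    rw [minorDet_diagonal hk l D e]
    refine mul_ne_zero (pow_ne_zero _ (det_vandermonde_ne_zero_iff.2 ?_))
      (Finset.prod_ne_zero_iff.2 fun j _ => mul_ne_zero (by simp) (hminor _))
    exact fun a b h => e.injective (Subtype.ext (hl _ _
      ((Finset.mem_powersetCard.1 (e a).2).2.trans (Finset.mem_powersetCard.1 (e b).2).2.symm) h))

end Certificates

section UnitsInSubring

variable {R : Type*} [CommRing R] {𝒪 : Subring R} {x y : R}

/-- `x` has an inverse which lies in the subring `𝒪`. Note that `x` itself need not lie in `𝒪`. -/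
def HasInverseIn (𝒪 : Subring R) (x : R) : Prop :=
  ∃ y ∈ 𝒪, x * y = 1

lemma HasInverseIn.isUnit (h : HasInverseIn 𝒪 x) : IsUnit x :=
  let ⟨_, _, hxy⟩ := h
  .of_mul_eq_one _ hxy

lemma HasInverseIn.of_mul_left (h : HasInverseIn 𝒪 (x * y)) (hy : y ∈ 𝒪) : HasInverseIn 𝒪 x := by
  obtain ⟨z, hz, hxyz⟩ := h
  exact ⟨y * z, mul_mem hy hz, by rw [← mul_assoc, hxyz]⟩

lemma HasInverseIn.of_mul_right (h : HasInverseIn 𝒪 (x * y)) (hx : x ∈ 𝒪) : HasInverseIn 𝒪 y :=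
  .of_mul_left (by rwa [mul_comm]) hx

lemma HasInverseIn.of_pow {k : ℕ} (h : HasInverseIn 𝒪 (x ^ k)) (hk : k ≠ 0) (hx : x ∈ 𝒪) :
    HasInverseIn 𝒪 x :=
  .of_mul_left (by rwa [mul_pow_sub_one hk]) (pow_mem hx (k - 1))

lemma HasInverseIn.pow (h : HasInverseIn 𝒪 x) (k : ℕ) : HasInverseIn 𝒪 (x ^ k) := by
  obtain ⟨y, hy, hxy⟩ := h
  exact ⟨y ^ k, pow_mem hy k, by rw [← mul_pow, hxy, one_pow]⟩

lemma HasInverseIn.neg (h : HasInverseIn 𝒪 x) : HasInverseIn 𝒪 (-x) := by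
  obtain ⟨y, hy, hxy⟩ := h
  exact ⟨-y, neg_mem hy, by rw [neg_mul_neg, hxy]⟩

lemma HasInverseIn.of_prod {ι : Type*} {s : Finset ι} {f : ι → R}
    (h : HasInverseIn 𝒪 (∏ i ∈ s, f i)) (hf : ∀ i ∈ s, f i ∈ 𝒪) {i : ι} (hi : i ∈ s) :
    HasInverseIn 𝒪 (f i) := by
  classical
  rw [← Finset.mul_prod_erase s f hi] at h
  exact h.of_mul_left (prod_mem fun j hj => hf j (Finset.mem_of_mem_erase hj))

open Matrix

variable {ι : Type*} [Fintype ι] [DecidableEq ι]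

lemma det_mem_of_mem_matrix {A : Matrix ι ι R} (hA : A ∈ 𝒪.matrix) : A.det ∈ 𝒪 := by
  obtain ⟨B, rfl⟩ : ∃ B : Matrix ι ι 𝒪, B.map 𝒪.subtype = A := ⟨fun i j => ⟨A i j, hA i j⟩, rfl⟩
  exact RingHom.map_det 𝒪.subtype B ▸ B.det.2

lemma trace_mem_of_mem_matrix {A : Matrix ι ι R} (hA : A ∈ 𝒪.matrix) : A.trace ∈ 𝒪 :=
  sum_mem fun i _ => hA i i

lemma mem_matrix_of_mul_eq_one {A B : Matrix ι ι R} (hA : A ∈ 𝒪.matrix)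
    (hdet : HasInverseIn 𝒪 A.det) (hAB : A * B = 1) : B ∈ 𝒪.matrix := by
  obtain ⟨c, hc, hdc⟩ := hdet
  have hB : B = c • A.adjugate := by
    rw [← mul_one B, ← one_smul R (1 : Matrix ι ι R), ← hdc, mul_comm, mul_smul, ← mul_adjugate,
      mul_smul_comm, ← mul_assoc, mul_eq_one_comm.1 hAB, one_mul]
  have hadj : A.adjugate ∈ 𝒪.matrix := fun i j => by
    rw [adjugate_apply]
    refine det_mem_of_mem_matrix fun k l => ?_
    rw [updateRow_apply]
    split_ifs
    · rw [Pi.single_apply]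
      split_ifs
      exacts [one_mem 𝒪, zero_mem 𝒪]
    · exact hA k l
  rw [hB]
  exact fun i j => 𝒪.mul_mem hc (hadj i j)

end UnitsInSubring

section RegularRepresentation

open Matrix

variable {R : Type*} [CommRing R] {n : ℕ} {𝒪 : Subring R}

/-- Conjugation by a unit, as an algebra homomorphism. -/
def conjAlgHom {S : Type*} [Ring S] [Algebra R S] (u : Sˣ) : S →ₐ[R] S where
  toFun x := u * x * u⁻¹.val
  map_one' := by rw [mul_one, Units.mul_inv]
  map_mul' x y := by simp only [mul_assoc, Units.inv_mul_cancel_left]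
  map_zero' := by rw [mul_zero, zero_mul]
  map_add' x y := by rw [mul_add, add_mul]
  commutes' r := by rw [← Algebra.commutes, mul_assoc, Units.mul_inv, mul_one]

/-- Left multiplication of `n × n` matrices on the free module of `n × n` matrices, in the basis
obtained from the matrix units by the change of coordinates `P`. -/
def regularRep (P : (Matrix (Fin n × Fin n) (Fin n × Fin n) R)ˣ) :
    Matrix (Fin n) (Fin n) R →ₐ[R] Matrix (Fin n × Fin n) (Fin n × Fin n) R :=
  (conjAlgHom P).comp
    { (blockDiagonalRingHom (Fin n) (Fin n) R).comp (Pi.constRingHom (Fin n) _) with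
      commutes' := fun r => by
        ext ⟨i, k⟩ ⟨j, l⟩
        simp [algebraMap_matrix_apply, blockDiagonal_apply, ← ite_and, and_comm] }

variable (P : (Matrix (Fin n × Fin n) (Fin n × Fin n) R)ˣ) (x : Matrix (Fin n) (Fin n) R)

lemma regularRep_apply :
    regularRep P x = P.val * blockDiagonal (fun _ => x) * P⁻¹.val := rfl

lemma trace_regularRep : trace (regularRep P x) = n * trace x := by
  rw [regularRep_apply, trace_units_conj, trace_blockDiagonal]
  simp

lemma det_regularRep : det (regularRep P x) = det x ^ n := by
  rw [regularRep_apply, det_units_conj, det_blockDiagonal]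
  simp

lemma regularRep_injective [NeZero n] : Function.Injective (regularRep P) := by
  intro x y hxy
  simp only [regularRep_apply, Units.mul_left_inj, Units.mul_right_inj] at hxy
  exact congrFun (blockDiagonal_injective hxy) 0

lemma mul_blockDiagonal_mul_apply {ι κ : Type*} [Fintype ι] [DecidableEq ι]
    (U : Matrix κ (ι × ι) R) (W : Matrix (ι × ι) κ R) (x : Matrix ι ι R) (p q : κ) :
    (U * blockDiagonal (fun _ : ι => x) * W) p q =
      trace ((of fun i j => U p (j, i)) * x * of fun i j => W (i, j) q) := by
  simp only [trace, diag_apply, mul_apply, of_apply, blockDiagonal_apply, Fintype.sum_prod_type,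
    mul_ite, mul_zero, Finset.sum_ite_eq', Finset.mem_univ, if_true]
  exact Finset.sum_comm

lemma exists_regularRep_mem_matrix {A D : Matrix (Fin n) (Fin n) R}
    (hgram : HasInverseIn 𝒪 (gramDet A D)) {X : Set (Matrix (Fin n) (Fin n) R)}
    (hX : ∀ x ∈ insert 1 X, ∀ a b a' b' : Fin n,
      trace (A ^ a.val * D * A ^ b.val * x * (A ^ a'.val * D * A ^ b'.val)) ∈ 𝒪) :
    ∃ P : (Matrix (Fin n × Fin n) (Fin n × Fin n) R)ˣ, ∀ x ∈ X, regularRep P x ∈ 𝒪.matrix := by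
  let P := of fun p q : Fin n × Fin n => (A ^ p.1.val * D * A ^ p.2.val) q.2 q.1
  let Q := of fun q p : Fin n × Fin n => (A ^ p.2.val * D * A ^ p.1.val) q.1 q.2
  have hPQ (x : Matrix (Fin n) (Fin n) R) : P * blockDiagonal (fun _ => x) * Q = of fun p q =>
      trace (A ^ p.1.val * D * A ^ p.2.val * x * (A ^ q.2.val * D * A ^ q.1.val)) := by
    ext p q
    exact mul_blockDiagonal_mul_apply P Q x p q
  have hmem : ∀ x ∈ insert 1 X, P * blockDiagonal (fun _ => x) * Q ∈ 𝒪.matrix := by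
    intro x hx
    rw [hPQ]
    exact fun p q => hX x hx p.1 p.2 q.2 q.1
  have hone : P * Q = P * blockDiagonal (fun _ => 1) * Q := by
    rw [← Pi.one_def, blockDiagonal_one, mul_one]
  have hdet : HasInverseIn 𝒪 (P * Q).det := by
    convert hgram using 1
    rw [hone, hPQ, gramDet]
    congr! 4 with p q
    rw [mul_one, ← mul_assoc _ _ (A ^ q.1.val), trace_mul_comm, add_comm p.1.val, pow_add,
      pow_add]
    simp only [mul_assoc]
  have hP : IsUnit P := by
    rw [isUnit_iff_isUnit_det]
    exact isUnit_of_mul_isUnit_left (det_mul P Q ▸ hdet.isUnit)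
  have hQ : IsUnit Q := by
    rw [isUnit_iff_isUnit_det]
    exact isUnit_of_mul_isUnit_right (det_mul P Q ▸ hdet.isUnit)
  refine ⟨hP.unit, fun x hx => ?_⟩
  have hfactor : regularRep hP.unit x = P * blockDiagonal (fun _ => x) * Q *
      ((hQ.unit⁻¹ * hP.unit⁻¹ : (Matrix _ _ R)ˣ) : Matrix _ _ R) := by
    rw [regularRep_apply, Units.val_mul, ← mul_assoc, mul_assoc _ Q, hQ.mul_val_inv, mul_one,
      hP.unit_spec]
  rw [hfactor]
  refine mul_mem (hmem x (Set.mem_insert_of_mem 1 hx))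
    (mem_matrix_of_mul_eq_one (hone ▸ hmem 1 (Set.mem_insert 1 X)) hdet ?_)
  rw [Units.val_mul, ← mul_assoc, mul_assoc P, hQ.mul_val_inv, mul_one, hP.mul_val_inv]

end RegularRepresentation

section IntegralMatrices

open Matrix

variable {R : Type*} [CommRing R] {n : ℕ} {𝒪 : Subring R}
  {P : (Matrix (Fin n × Fin n) (Fin n × Fin n) R)ˣ} {x y D : Matrix (Fin n) (Fin n) R}
  {l : Fin n → R}

/-- The `n × n` matrices whose left multiplication operator has coefficients in `𝒪`, in the basis
given by `P`. -/
def integralMatrices (𝒪 : Subring R) (P : (Matrix (Fin n × Fin n) (Fin n × Fin n) R)ˣ) :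
    Subring (Matrix (Fin n) (Fin n) R) :=
  𝒪.matrix.comap (regularRep P).toRingHom

lemma smul_mem_integralMatrices {r : R} (hr : r ∈ 𝒪) (hx : x ∈ integralMatrices 𝒪 P) :
    r • x ∈ integralMatrices 𝒪 P := by
  change regularRep P (r • x) ∈ 𝒪.matrix
  rw [map_smul]
  exact fun i j => 𝒪.mul_mem hr (hx i j)

lemma isIntegral_of_mem_integralMatrices [NeZero n] (hx : x ∈ integralMatrices 𝒪 P) :
    IsIntegral 𝒪 x := by
  rw [← isIntegral_algHom_iff ((regularRep P).restrictScalars 𝒪) (regularRep_injective P)]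
  let X : Matrix (Fin n × Fin n) (Fin n × Fin n) 𝒪 := of fun i j => ⟨regularRep P x i j, hx i j⟩
  exact X.isIntegral.map (Algebra.ofId 𝒪 R).mapMatrix

lemma eigenvalue_mem_of_diagonal_mem [NeZero n] [IsIntegrallyClosedIn 𝒪 R]
    (hl : diagonal l ∈ integralMatrices 𝒪 P) (j : Fin n) : l j ∈ 𝒪 := by
  have hdiag : IsIntegral 𝒪 (diagonalAlgHom 𝒪 l) := isIntegral_of_mem_integralMatrices hl
  rw [isIntegral_algHom_iff _ diagonal_injective] at hdiag
  exact Subring.isIntegrallyClosedIn_iff.1 ‹_› (hdiag.map (Pi.evalAlgHom 𝒪 (fun _ => R) j))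

lemma det_mem_of_mem_integralMatrices [NeZero n] [IsIntegrallyClosedIn 𝒪 R]
    (hx : x ∈ integralMatrices 𝒪 P) : x.det ∈ 𝒪 := by
  have hpow : x.det ^ n ∈ 𝒪 := det_regularRep P x ▸ det_mem_of_mem_matrix hx
  exact Subring.isIntegrallyClosedIn_iff.1 ‹_›
    (.of_pow (NeZero.pos n) (isIntegral_algebraMap (x := (⟨_, hpow⟩ : 𝒪))))

lemma trace_mem_of_mem_integralMatrices (hn : HasInverseIn 𝒪 (n : R))
    (hx : x ∈ integralMatrices 𝒪 P) : x.trace ∈ 𝒪 := by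
  obtain ⟨c, hc, hnc⟩ := hn
  have htrace : n * x.trace ∈ 𝒪 := trace_regularRep P x ▸ trace_mem_of_mem_matrix hx
  rw [← one_mul x.trace, ← hnc, mul_comm _ c, mul_assoc]
  exact mul_mem hc htrace

lemma mem_integralMatrices_of_mul_eq_one (hx : x ∈ integralMatrices 𝒪 P)
    (hdet : HasInverseIn 𝒪 x.det) (hxy : x * y = 1) : y ∈ integralMatrices 𝒪 P :=
  mem_matrix_of_mul_eq_one hx (det_regularRep P x ▸ hdet.pow n)
    (by rw [← map_mul, hxy, map_one])

lemma hasInverseIn_eigenvalue_sub [NeZero n] [IsIntegrallyClosedIn 𝒪 R]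
    (hl : diagonal l ∈ integralMatrices 𝒪 P) (htrace : HasInverseIn 𝒪 (traceDet (diagonal l)))
    {j k : Fin n} (hjk : j ≠ k) : HasInverseIn 𝒪 (l j - l k) := by
  have hmem (i j : Fin n) : l j - l i ∈ 𝒪 :=
    sub_mem (eigenvalue_mem_of_diagonal_mem hl j) (eigenvalue_mem_of_diagonal_mem hl i)
  wlog hlt : k < j generalizing j k
  · simpa using (this hjk.symm (lt_of_le_of_ne (not_lt.1 hlt) hjk)).neg
  rw [traceDet_diagonal, det_vandermonde] at htrace
  have hprod := htrace.of_pow two_ne_zero (prod_mem fun i _ => prod_mem fun j _ => hmem i j)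
  exact (hprod.of_prod (fun i _ => prod_mem fun j _ => hmem i j) (Finset.mem_univ k)).of_prod
    (fun j _ => hmem k j) (Finset.mem_Ioi.2 hlt)

-- The spectral projections are the Lagrange interpolation polynomials, evaluated at `diagonal l`.
lemma single_mem_integralMatrices [NeZero n] [IsIntegrallyClosedIn 𝒪 R]
    (hl : diagonal l ∈ integralMatrices 𝒪 P) (htrace : HasInverseIn 𝒪 (traceDet (diagonal l)))
    (j : Fin n) : single j j 1 ∈ integralMatrices 𝒪 P := by
  choose! c hc hlc using fun k (hk : k ≠ j) => hasInverseIn_eigenvalue_sub hl htrace hk.symm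
  have hlagrange : Pi.single j 1 = ∏ k ∈ Finset.univ.erase j, c k • (l - l k • 1) := by
    ext i
    simp only [Finset.prod_apply, Pi.smul_apply, Pi.sub_apply, Pi.one_apply, smul_eq_mul, mul_one]
    obtain rfl | hij := eq_or_ne i j
    · rw [Pi.single_eq_same, Finset.prod_eq_one fun k hk => ?_]
      rw [mul_comm, hlc k (Finset.ne_of_mem_erase hk)]
    · rw [Pi.single_eq_of_ne hij, Finset.prod_eq_zero (i := i) (by simp [hij])]
      rw [sub_self, mul_zero]
  have hmem : Pi.single j 1 ∈ (integralMatrices 𝒪 P).comap (diagonalAlgHom R).toRingHom := by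
    rw [hlagrange]
    refine prod_mem fun k hk => ?_
    change diagonalAlgHom R (c k • (l - l k • 1)) ∈ integralMatrices 𝒪 P
    rw [map_smul, map_sub, map_smul, map_one]
    exact smul_mem_integralMatrices (hc k (Finset.ne_of_mem_erase hk))
      (sub_mem hl (smul_mem_integralMatrices (eigenvalue_mem_of_diagonal_mem hl k) (one_mem _)))
  rw [← diagonal_single]
  exact hmem

lemma hasInverseIn_mul_symm_entry [NeZero n] [IsIntegrallyClosedIn 𝒪 R]
    (hn : HasInverseIn 𝒪 (n : R)) (hl : diagonal l ∈ integralMatrices 𝒪 P)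
    (htrace : HasInverseIn 𝒪 (traceDet (diagonal l))) (hD : D ∈ integralMatrices 𝒪 P)
    (hgram : HasInverseIn 𝒪 (gramDet (diagonal l) D)) (j k : Fin n) :
    HasInverseIn 𝒪 (D j k * D k j) := by
  have hsingle := single_mem_integralMatrices hl htrace
  have hmem (p : Fin n × Fin n) : D p.1 p.2 * D p.2 p.1 ∈ 𝒪 := by
    have htr : trace (single p.1 p.1 1 * D * single p.2 p.2 1 * D * single p.1 p.1 1) ∈ 𝒪 :=
      trace_mem_of_mem_integralMatrices hn
        (mul_mem (mul_mem (mul_mem (mul_mem (hsingle p.1) hD) (hsingle p.2)) hD) (hsingle p.1))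
    simpa only [single_mul_mul_single, trace_single_eq_same, one_mul, mul_one] using htr
  have hvand : det (vandermonde l) ∈ 𝒪 :=
    det_mem_of_mem_matrix fun i _ => pow_mem (eigenvalue_mem_of_diagonal_mem hl i) _
  rw [gramDet_diagonal] at hgram
  exact (hgram.of_mul_right (pow_mem hvand _)).of_prod (fun p _ => hmem p) (Finset.mem_univ (j, k))

/-- The projection onto the span of the basis vectors indexed by `s`. -/
def coordProj (R : Type*) [CommRing R] (s : Finset (Fin n)) : Matrix (Fin n) (Fin n) R :=
  ∑ k ∈ s, single k k 1

lemma coordProj_eq_diagonal (s : Finset (Fin n)) :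
    coordProj R s = diagonal fun i => if i ∈ s then 1 else 0 := by
  simp only [coordProj, ← sum_single_eq_diagonal, apply_ite, single_zero, ← Finset.sum_filter,
    Finset.filter_mem_eq_inter, Finset.univ_inter]

lemma isIdempotentElem_coordProj (s : Finset (Fin n)) : IsIdempotentElem (coordProj R s) := by
  rw [IsIdempotentElem, coordProj_eq_diagonal, diagonal_mul_diagonal]
  simp only [mul_ite, mul_one, mul_zero, ← ite_and, and_self]

lemma det_coordProj_compression (s : Finset (Fin n)) (D : Matrix (Fin n) (Fin n) R) :
    det (coordProj R s * D * coordProj R s + (1 - coordProj R s)) =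
      (D.submatrix (Subtype.val : s → Fin n) Subtype.val).det := by
  have happly (i j : Fin n) : (coordProj R s * D * coordProj R s + (1 - coordProj R s)) i j =
      if i ∈ s ∧ j ∈ s then D i j else if i = j ∧ i ∉ s then 1 else 0 := by
    rw [coordProj_eq_diagonal, Matrix.add_apply, Matrix.sub_apply, mul_diagonal, diagonal_mul,
      diagonal_apply, one_apply]
    split_ifs <;> simp_all
  rw [twoBlockTriangular_det' _ (· ∈ s) fun i hi j hj => by simp [happly, hi, hj]]
  have hcompl : toSquareBlockProp (coordProj R s * D * coordProj R s + (1 - coordProj R s))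
      (· ∉ s) = 1 := by
    ext i j
    simp [toSquareBlockProp, happly, i.2, one_apply, Subtype.ext_iff]
  have hblock : toSquareBlockProp (coordProj R s * D * coordProj R s + (1 - coordProj R s))
      (· ∈ s) = D.submatrix Subtype.val Subtype.val := by
    ext i j
    simp [toSquareBlockProp, happly, i.2, j.2]
  rw [hblock, hcompl, det_one, mul_one]
  congr!

lemma exists_compression_inverse_mem [NeZero n] [IsIntegrallyClosedIn 𝒪 R]
    (hl : diagonal l ∈ integralMatrices 𝒪 P)
    (htrace : HasInverseIn 𝒪 (traceDet (diagonal l))) (hD : D ∈ integralMatrices 𝒪 P)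
    (s : Finset (Fin n)) (hminor : HasInverseIn 𝒪 (minorDet s.card (diagonal l) D)) :
    ∃ x ∈ integralMatrices 𝒪 P,
      x * (coordProj R s * D * coordProj R s) = coordProj R s := by
  have hproj (t : Finset (Fin n)) : coordProj R t ∈ integralMatrices 𝒪 P :=
    sum_mem fun k _ => single_mem_integralMatrices hl htrace k
  let α (t : Finset (Fin n)) := coordProj R t * D * coordProj R t + (1 - coordProj R t)
  have hα (t : Finset (Fin n)) : α t ∈ integralMatrices 𝒪 P :=
    add_mem (mul_mem (mul_mem (hproj t) hD) (hproj t)) (sub_mem (one_mem _) (hproj t))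
  obtain ⟨e⟩ := nonempty_equiv_powersetCard n s.card
  have hvand : det (vandermonde fun j => ∏ i ∈ (e j).1, l i) ∈ 𝒪 :=
    det_mem_of_mem_matrix fun j _ =>
      pow_mem (prod_mem fun i _ => eigenvalue_mem_of_diagonal_mem hl i) _
  have hdet : HasInverseIn 𝒪 (α s).det := by
    rw [minorDet_diagonal (by simpa using s.card_le_univ) l D e] at hminor
    simp only [← det_coordProj_compression] at hminor
    have hsign : (-1) ^ s.card ∈ 𝒪 := pow_mem (neg_mem (one_mem 𝒪)) _
    have hfactor := (hminor.of_mul_right (pow_mem hvand 2)).of_prod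
      (fun j _ => mul_mem hsign (det_mem_of_mem_integralMatrices (hα (e j).1)))
      (Finset.mem_univ (e.symm ⟨s, by simp⟩))
    rw [e.apply_symm_apply] at hfactor
    exact hfactor.of_mul_right hsign
  have hmul : α s * (α s)⁻¹ = 1 := mul_nonsing_inv _ hdet.isUnit
  refine ⟨(α s)⁻¹, mem_integralMatrices_of_mul_eq_one (hα s) hdet hmul, ?_⟩
  have hαs : α s * coordProj R s = coordProj R s * D * coordProj R s := by
    rw [add_mul, sub_mul, one_mul, mul_assoc _ (coordProj R s), isIdempotentElem_coordProj s,
      sub_self, add_zero]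
  rw [← hαs, ← mul_assoc, mul_eq_one_comm.1 hmul, one_mul]

lemma completeOrthogonalIdempotents_single_diag :
    CompleteOrthogonalIdempotents fun j : Fin n => single j j (1 : R) := by
  simpa only [Function.comp_def, diagonalRingHom_apply, diagonal_single] using
    (CompleteOrthogonalIdempotents.single fun _ : Fin n => R).map (diagonalRingHom (Fin n) R)

-- Since `T` omits `j`, left multiplication by `single k j` kills its projection, while the
-- transition `k → j → k` has the invertible amplitude `D k j * D j k`.
lemma exists_transverse_mem [NeZero n] [IsIntegrallyClosedIn 𝒪 R] (hn : HasInverseIn 𝒪 (n : R))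
    (hl : diagonal l ∈ integralMatrices 𝒪 P) (htrace : HasInverseIn 𝒪 (traceDet (diagonal l)))
    (hD : D ∈ integralMatrices 𝒪 P) (hgram : HasInverseIn 𝒪 (gramDet (diagonal l) D))
    {T : Finset (Fin n)} {j : Fin n} (hj : j ∉ T) (k : Fin n) :
    ∃ x ∈ integralMatrices 𝒪 P,
      x * D * single k k 1 = single k k 1 ∧ x * coordProj R T = 0 := by
  have hsingle := single_mem_integralMatrices hl htrace
  obtain ⟨c, hc, hDc⟩ := hasInverseIn_mul_symm_entry hn hl htrace hD hgram k j
  refine ⟨c • (single k k 1 * D * single j j 1), smul_mem_integralMatrices hc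
    (mul_mem (mul_mem (hsingle k) hD) (hsingle j)), ?_, ?_⟩
  · rw [smul_mul_assoc, smul_mul_assoc, single_mul_mul_single, single_mul_mul_single,
      smul_single, smul_eq_mul, one_mul, mul_one, mul_one, mul_comm, hDc]
  · rw [coordProj, smul_mul_assoc, mul_assoc,
      completeOrthogonalIdempotents_single_diag.mul_sum_of_notMem hj, mul_zero, smul_zero]

end IntegralMatrices

section PolyBounded

variable {I : Type*} {R : I → ℝ} {hR : ∀ i, 2 ≤ R i} {f : I → ℂ}

/-- The subring of those families of complex numbers which are bounded by a power of the family
`R`. -/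
def polyBounded (R : I → ℝ) (hR : ∀ i, 2 ≤ R i) : Subring (I → ℂ) where
  carrier := {f | ∃ C : ℕ, ∀ i, ‖f i‖ ≤ R i ^ C}
  zero_mem' := ⟨0, by simp⟩
  one_mem' := ⟨0, by simp⟩
  neg_mem' := by simp
  mul_mem' := by
    rintro f g ⟨C, hf⟩ ⟨C', hg⟩
    refine ⟨C + C', fun i => ?_⟩
    rw [Pi.mul_apply, norm_mul, pow_add]
    exact mul_le_mul (hf i) (hg i) (norm_nonneg _) ((norm_nonneg _).trans (hf i))
  add_mem' := by
    rintro f g ⟨C, hf⟩ ⟨C', hg⟩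
    refine ⟨C + C' + 1, fun i => ?_⟩
    have : 2 ≤ R i := hR i
    have : 1 ≤ R i := by linarith
    calc ‖f i + g i‖ ≤ R i ^ (C + C') + R i ^ (C + C') := by
          refine (norm_add_le _ _).trans (add_le_add ((hf i).trans ?_) ((hg i).trans ?_)) <;>
            gcongr <;> omega
      _ ≤ R i ^ (C + C') * R i := by nlinarith [pow_pos (by linarith : 0 < R i) (C + C')]
      _ = R i ^ (C + C' + 1) := (pow_succ _ _).symm

lemma norm_mem_polyBounded (hf : f ∈ polyBounded R hR) :
    (fun i => (‖f i‖ : ℂ)) ∈ polyBounded R hR :=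
  hf.imp fun C hC i => by simpa using hC i

lemma const_mem_polyBounded (c : ℂ) : (fun _ => c) ∈ polyBounded R hR := by
  obtain ⟨C, hC⟩ := pow_unbounded_of_one_lt ‖c‖ one_lt_two
  exact ⟨C, fun i => hC.le.trans (by gcongr; exact hR i)⟩

lemma hasInverseIn_polyBounded_of_one_le_norm (hf : ∀ i, 1 ≤ ‖f i‖) :
    HasInverseIn (polyBounded R hR) f := by
  refine ⟨f⁻¹, ⟨0, fun i => ?_⟩, ?_⟩
  · simpa using inv_le_one_of_one_le₀ (hf i)
  · ext i
    exact mul_inv_cancel₀ (norm_pos_iff.1 (one_pos.trans_le (hf i)))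

instance isIntegrallyClosedIn_polyBounded : IsIntegrallyClosedIn (polyBounded R hR) (I → ℂ) := by
  refine Subring.isIntegrallyClosedIn_iff.2 fun f ⟨p, hp, hfp⟩ => ?_
  have hcoeff : (1 + ∑ k ∈ Finset.range p.natDegree, fun i => (‖(p.coeff k).1 i‖ : ℂ)) ∈
      polyBounded R hR :=
    add_mem (one_mem _) (sum_mem fun k _ => norm_mem_polyBounded (p.coeff k).2)
  refine hcoeff.imp fun C hC i => le_trans ?_ (hC i)
  set s := ∑ k ∈ Finset.range p.natDegree, ‖(p.coeff k).1 i‖ with hs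
  have hs0 : 0 ≤ s := Finset.sum_nonneg fun k _ => norm_nonneg _
  suffices ‖f i‖ ≤ 1 + s by
    have hnorm : ‖((1 + s : ℝ) : ℂ)‖ = 1 + s := by
      rw [Complex.norm_real, Real.norm_of_nonneg (by positivity)]
    rw [← hnorm, hs] at this
    simpa using this
  obtain hle | hlt := le_or_gt ‖f i‖ 1
  · linarith
  have hroot : f i ^ p.natDegree = -∑ k ∈ Finset.range p.natDegree, (p.coeff k).1 i * f i ^ k := by
    rw [Polynomial.eval₂_eq_sum_range, Finset.sum_range_succ, hp.coeff_natDegree, map_one,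
      one_mul] at hfp
    have := congrFun hfp i
    rw [Pi.add_apply, Finset.sum_apply, Pi.pow_apply, Pi.zero_apply] at this
    exact eq_neg_of_add_eq_zero_right this
  have hdeg : p.natDegree ≠ 0 := by
    intro h0
    simp [h0] at hroot
  have hbound : ‖f i‖ ^ p.natDegree ≤ s * ‖f i‖ ^ (p.natDegree - 1) := by
    rw [← norm_pow, hroot, norm_neg, hs, Finset.sum_mul]
    refine (norm_sum_le _ _).trans (Finset.sum_le_sum fun k hk => ?_)
    rw [norm_mul, norm_pow]
    gcongr
    · exact hlt.le
    · exact Nat.le_sub_one_of_lt (Finset.mem_range.1 hk)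
  rw [← mul_pow_sub_one hdeg] at hbound
  linarith [le_of_mul_le_mul_right hbound (by positivity)]

end PolyBounded

section UniformPower

variable {𝕜 I Λ ι V : Type*} [NontriviallyNormedField 𝕜] [Ring Λ] {𝒮 : Subring Λ} [Fintype ι]
  [NormedAddCommGroup V] [NormedSpace 𝕜 V] {R : I → ℝ} {Φ : I → Λ →+* (V →L[𝕜] V)}

lemma exists_forall_norm_le_pow (hR : ∀ i, 2 ≤ R i)
    (hΦ : ∀ x ∈ 𝒮, ∃ C : ℕ, ∀ i, ‖Φ i x‖ ≤ R i ^ C) {F : Set Λ} (hF : F.Finite) (hF𝒮 : F ⊆ 𝒮) :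
    ∃ C : ℕ, ∀ x ∈ F, ∀ i, ‖Φ i x‖ ≤ R i ^ C := by
  choose! c hc using hΦ
  obtain ⟨C, hC⟩ := (hF.image c).bddAbove
  refine ⟨C, fun x hx i => (hc x (hF𝒮 hx) i).trans ?_⟩
  have : 1 ≤ R i := one_le_two.trans (hR i)
  gcongr
  exact hC (Set.mem_image_of_mem c hx)

section

variable {B C D E p : V →L[𝕜] V} {M : ℝ}

lemma injective_of_isUnit (hB : IsUnit B) : Function.Injective B := by
  obtain ⟨C, hC⟩ := hB.exists_left_inv
  exact Function.LeftInverse.injective (g := C) (DFunLike.congr_fun hC)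

lemma norm_le_of_mul_compression_eq (hC : C * (E * D * E) = E) (hM : ‖C‖ ≤ M) (v : V)
    (hv : E v = v) : ‖v‖ ≤ M * ‖E (D v)‖ :=
  calc ‖v‖ = ‖(C * (E * D * E)) v‖ := by rw [hC, hv]
    _ = ‖C (E (D v))‖ := by simp only [mul_apply_eq_comp, hv]
    _ ≤ M * ‖E (D v)‖ := C.le_of_opNorm_le hM _

lemma exists_transverse_vector (hCD : C * D * p = p) (hCE : C * E = 0) (hEp : E * p = p)
    (hp : p ≠ 0) (hM : ‖C‖ ≤ M) : ∃ u, u ≠ 0 ∧ E u = u ∧ ‖u‖ ≤ M * ‖D u - E (D u)‖ := by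
  obtain ⟨v, hv⟩ := DFunLike.ne_iff.1 hp
  refine ⟨p v, hv, DFunLike.congr_fun hEp v, ?_⟩
  calc ‖p v‖ = ‖(C * D * p - C * E * (D * p)) v‖ := by rw [hCD, hCE, zero_mul, sub_zero]
    _ = ‖C (D (p v) - E (D (p v)))‖ := by simp only [map_sub, sub_apply, mul_apply_eq_comp]
    _ ≤ M * ‖D (p v) - E (D (p v))‖ := C.le_of_opNorm_le hM _

end

lemma IsFreePair.of_eigenprojections [FiniteDimensional 𝕜 V] {e : ι → V →L[𝕜] V}
    (he : CompleteOrthogonalIdempotents e) {A D β γ : V →L[𝕜] V} (hA : IsUnit A) (hD : IsUnit D)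
    {T : Finset ι} (hβ : β * ((∑ j ∈ T, e j) * D * ∑ j ∈ T, e j) = ∑ j ∈ T, e j) {k : ι}
    (hk : k ∈ T) (hek : e k ≠ 0) (hγD : γ * D * e k = e k) (hγ : γ * ∑ j ∈ T, e j = 0) {M r : ℝ}
    (hM : 1 ≤ M) (heM : ∀ j, ‖e j‖ ≤ M) (hEM : ‖∑ j ∈ T, e j‖ ≤ M) (hEM' : ‖1 - ∑ j ∈ T, e j‖ ≤ M)
    (hDM : ‖D‖ ≤ M) (hβM : ‖β‖ ≤ M) (hγM : ‖γ‖ ≤ M) {μ : ι → 𝕜} (hμ : ∀ j, e j * A = μ j • e j)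
    (hμ0 : ∀ j, μ j ≠ 0) {m L : ℕ} (hr : 0 ≤ r)
    (hgap : ∀ j ∉ T, ∀ k ∈ T, r * ‖μ j‖ ^ m ≤ ‖μ k‖ ^ m)
    (hL : 16 * M ^ 6 * (Fintype.card ι * M) ^ 2 ≤ r ^ L) :
    IsFreePair (A ^ (m * L)) (D * A ^ (m * L)) := by
  have : Nonempty ι := ⟨k⟩
  have hEk : (∑ j ∈ T, e j) * e k = e k := by
    classical simp only [Finset.sum_mul, he.mul_eq, Finset.sum_ite_eq', hk, if_true]
  exact .of_gap hM hEM hEM' hDM he.isIdempotentElem_sum (norm_le_of_mul_compression_eq hβ hβM)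
    (exists_transverse_vector hγD hγ hEk hek hγM)
    (fun v => sum_apply_ne_zero_of_eigenprojections he (fun j => mul_pow_eq_pow_smul (hμ j) _)
      fun j _ => pow_ne_zero _ (hμ0 j))
    (gap_pow_of_eigenprojections he heM hμ (fun j _ => hμ0 j) hr hgap (by positivity) hL)
    (injective_of_isUnit (hA.pow _)) (injective_of_isUnit hD)

theorem exists_pow_forall_isFreePair [FiniteDimensional 𝕜 V] (hR : ∀ i, 2 ≤ R i)
    (hΦ : ∀ x ∈ 𝒮, ∃ C : ℕ, ∀ i, ‖Φ i x‖ ≤ R i ^ C) {e : ι → Λ}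
    (he : CompleteOrthogonalIdempotents e) (he𝒮 : ∀ j, e j ∈ 𝒮) {A D β γ : Λ} (hA : IsUnit A)
    (hD : IsUnit D) (hD𝒮 : D ∈ 𝒮) (hβ𝒮 : β ∈ 𝒮) (hγ𝒮 : γ ∈ 𝒮) {T : Finset ι}
    (hβ : β * ((∑ j ∈ T, e j) * D * ∑ j ∈ T, e j) = ∑ j ∈ T, e j) {k : ι} (hk : k ∈ T)
    (hek : ∀ i, Φ i (e k) ≠ 0) (hγD : γ * D * e k = e k) (hγ : γ * ∑ j ∈ T, e j = 0)
    {μ : I → ι → 𝕜} (hμ : ∀ i j, Φ i (e j * A) = μ i j • Φ i (e j)) (hμ0 : ∀ i j, μ i j ≠ 0)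
    {m : ℕ} (hgap : ∀ i, ∀ j ∉ T, ∀ k ∈ T, R i * ‖μ i j‖ ^ m ≤ ‖μ i k‖ ^ m) :
    ∃ K : ℕ, ∀ i, IsFreePair (Φ i (A ^ K)) (Φ i (D * A ^ K)) := by
  set E := ∑ j ∈ T, e j
  have hE𝒮 : E ∈ 𝒮 := sum_mem fun j _ => he𝒮 j
  obtain ⟨C, hC⟩ := exists_forall_norm_le_pow hR hΦ (F := {E, 1 - E, D, β, γ} ∪ Set.range e)
    (Set.toFinite _) (by
      rintro x ((rfl | rfl | rfl | rfl | rfl) | ⟨j, rfl⟩)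
      exacts [hE𝒮, sub_mem (one_mem _) hE𝒮, hD𝒮, hβ𝒮, hγ𝒮, he𝒮 j])
  obtain ⟨L, hL⟩ := pow_unbounded_of_one_lt (16 * (Fintype.card ι : ℝ) ^ 2) one_lt_two
  refine ⟨m * (L + 8 * C), fun i => ?_⟩
  have hRi : 1 ≤ R i := one_le_two.trans (hR i)
  have hE : ∑ j ∈ T, Φ i (e j) = Φ i E := (map_sum _ _ _).symm
  have hbound : 16 * (R i ^ C) ^ 6 * (Fintype.card ι * R i ^ C) ^ 2 ≤ R i ^ (L + 8 * C) :=
    calc 16 * (R i ^ C) ^ 6 * (Fintype.card ι * R i ^ C) ^ 2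
        = 16 * (Fintype.card ι : ℝ) ^ 2 * R i ^ (8 * C) := by ring
      _ ≤ R i ^ L * R i ^ (8 * C) := by
          gcongr
          exact hL.le.trans (by gcongr; exact hR i)
      _ = R i ^ (L + 8 * C) := (pow_add _ _ _).symm
  rw [map_mul, map_pow]
  refine .of_eigenprojections (e := fun j => Φ i (e j)) (β := Φ i β) (γ := Φ i γ)
    (he.map (Φ i)) (hA.map (Φ i)) (hD.map (Φ i)) ?_ hk (hek i) ?_ ?_ (one_le_pow₀ hRi)
    (fun j => hC (e j) (by simp) i) ?_ ?_ (hC D (by simp) i) (hC β (by simp) i)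
    (hC γ (by simp) i) (fun j => by rw [← map_mul, hμ]) (hμ0 i) (by positivity) (hgap i) hbound
  · simp only [hE, ← map_mul, hβ]
  · simp only [← map_mul, hγD]
  · rw [hE, ← map_mul, hγ, map_zero]
  · exact hE ▸ hC E (by simp) i
  · rw [hE, ← map_one (Φ i), ← map_sub]
    exact hC (1 - E) (by simp) i

end UniformPower

section UniformSplitting

open Matrix

lemma regularRep_map {R R' : Type*} [CommRing R] [CommRing R'] {n : ℕ} (φ : R →+* R')
    (P : (Matrix (Fin n × Fin n) (Fin n × Fin n) R)ˣ) (x : Matrix (Fin n) (Fin n) R) :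
    regularRep (Units.map φ.mapMatrix.toMonoidHom P) (x.map φ) = (regularRep P x).map φ := by
  rw [regularRep_apply, regularRep_apply, ← blockDiagonal_map _ φ (map_zero φ), Matrix.map_mul,
    Matrix.map_mul]
  rfl

lemma exists_norm_toEuclideanCLM_le {κ : Type*} [Fintype κ] [DecidableEq κ] :
    ∃ c : ℝ, ∀ M : Matrix κ κ ℂ, ‖toEuclideanCLM (𝕜 := ℂ) M‖ ≤ (∑ p, ∑ q, ‖M p q‖) * c := by
  let E := toEuclideanCLM (n := κ) (𝕜 := ℂ)
  obtain ⟨c, hc⟩ := Finite.bddAbove_range fun p : κ × κ => ‖E (single p.1 p.2 1)‖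
  refine ⟨c, fun M => ?_⟩
  simp only [Finset.sum_mul]
  change ‖E M‖ ≤ _
  conv_lhs => rw [matrix_eq_sum_single M, map_sum]
  refine norm_sum_le_of_le _ fun p _ => ?_
  rw [map_sum]
  refine norm_sum_le_of_le _ fun q _ => ?_
  rw [← mul_one (M p q), ← smul_eq_mul, ← smul_single, map_smul, norm_smul, smul_eq_mul, mul_one]
  gcongr
  exact hc ⟨(p, q), rfl⟩

variable {I : Type*} {n : ℕ}

/-- The action of `n × n` matrices by left multiplication on the Euclidean space of `n × n`
matrices, in the coordinates given by `P`. -/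
noncomputable def leftMulCLM (P : (Matrix (Fin n × Fin n) (Fin n × Fin n) ℂ)ˣ) :
    Matrix (Fin n) (Fin n) ℂ →ₐ[ℂ]
      EuclideanSpace ℂ (Fin n × Fin n) →L[ℂ] EuclideanSpace ℂ (Fin n × Fin n) :=
  (toEuclideanCLM (𝕜 := ℂ) (n := Fin n × Fin n)).toAlgEquiv.toAlgHom.comp (regularRep P)

lemma leftMulCLM_single_ne_zero [NeZero n] (P : (Matrix (Fin n × Fin n) (Fin n × Fin n) ℂ)ˣ)
    (k : Fin n) : leftMulCLM P (single k k 1) ≠ 0 := by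
  have hinj : Function.Injective (leftMulCLM P) :=
    (toEuclideanCLM (𝕜 := ℂ)).injective.comp (regularRep_injective P)
  intro h
  simpa using congrFun₂ ((map_eq_zero_iff _ hinj).1 h) k k

/-- The representation `leftMulCLM` of the specialisation at the index `i`. -/
noncomputable def evalRep (P : (Matrix (Fin n × Fin n) (Fin n × Fin n) (I → ℂ))ˣ) (i : I) :
    Matrix (Fin n) (Fin n) (I → ℂ) →+*
      EuclideanSpace ℂ (Fin n × Fin n) →L[ℂ] EuclideanSpace ℂ (Fin n × Fin n) :=
  (leftMulCLM (Units.map (Pi.evalRingHom (fun _ => ℂ) i).mapMatrix.toMonoidHom P)).toRingHom.comp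
    (Pi.evalRingHom (fun _ => ℂ) i).mapMatrix

variable {R : I → ℝ} {hR : ∀ i, 2 ≤ R i}
  {P : (Matrix (Fin n × Fin n) (Fin n × Fin n) (I → ℂ))ˣ}

lemma exists_norm_evalRep_le {x : Matrix (Fin n) (Fin n) (I → ℂ)}
    (hx : x ∈ integralMatrices (polyBounded R hR) P) :
    ∃ C : ℕ, ∀ i, ‖evalRep P i x‖ ≤ R i ^ C := by
  obtain ⟨c, hc⟩ := exists_norm_toEuclideanCLM_le (κ := Fin n × Fin n)
  have hmem : (∑ p, ∑ q, fun i => (‖regularRep P x p q i‖ : ℂ)) * (fun _ => (c : ℂ)) ∈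
      polyBounded R hR :=
    mul_mem (sum_mem fun p _ => sum_mem fun q _ => norm_mem_polyBounded (hx p q))
      (const_mem_polyBounded _)
  refine hmem.imp fun C hC i => ?_
  have heval : evalRep P i x =
      toEuclideanCLM (𝕜 := ℂ) ((regularRep P x).map (Pi.evalRingHom (fun _ => ℂ) i)) :=
    congrArg (toEuclideanCLM (𝕜 := ℂ)) (regularRep_map _ P x)
  rw [heval]
  refine (hc _).trans ((Real.le_norm_self _).trans ?_)
  rw [← Complex.norm_real]
  simpa using hC i

lemma evalRep_apply (x : Matrix (Fin n) (Fin n) (I → ℂ)) (i : I) :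
    evalRep P i x = leftMulCLM (Units.map (Pi.evalRingHom (fun _ => ℂ) i).mapMatrix.toMonoidHom P)
      (x.map (Pi.evalRingHom (fun _ => ℂ) i)) := rfl

lemma evalRep_single (i : I) (j : Fin n) (a : I → ℂ) :
    evalRep P i (single j j a) = a i • evalRep P i (single j j 1) := by
  rw [evalRep_apply, evalRep_apply, ← map_smul, map_single, map_single, smul_single, map_one,
    smul_eq_mul, mul_one]
  rfl

lemma evalRep_single_ne_zero [NeZero n] (i : I) (k : Fin n) : evalRep P i (single k k 1) ≠ 0 := by
  rw [evalRep_apply, map_single, map_one]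
  exact leftMulCLM_single_ne_zero _ k

theorem exists_pow_forall_isFreePair_of_diagonal [NeZero n] {l : Fin n → I → ℂ}
    {D : Matrix (Fin n) (Fin n) (I → ℂ)} (hl : diagonal l ∈ integralMatrices (polyBounded R hR) P)
    (hD : D ∈ integralMatrices (polyBounded R hR) P) (hunit : IsUnit D) (hl0 : ∀ i j, l j i ≠ 0)
    (htrace : HasInverseIn (polyBounded R hR) (traceDet (diagonal l)))
    (hgram : HasInverseIn (polyBounded R hR) (gramDet (diagonal l) D))
    {T : Finset (Fin n)} (hminor : HasInverseIn (polyBounded R hR) (minorDet T.card (diagonal l) D))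
    {j k : Fin n} (hj : j ∉ T) (hk : k ∈ T) {m : ℕ}
    (hgap : ∀ i, ∀ j ∉ T, ∀ k ∈ T, R i * ‖l j i‖ ^ m ≤ ‖l k i‖ ^ m) :
    ∃ K : ℕ, ∀ i, IsFreePair ((diagonal l ^ K).map (Pi.evalRingHom (fun _ => ℂ) i))
      ((D * diagonal l ^ K).map (Pi.evalRingHom (fun _ => ℂ) i)) := by
  have hn : HasInverseIn (polyBounded R hR) (n : I → ℂ) :=
    hasInverseIn_polyBounded_of_one_le_norm fun i => by
      simpa [Nat.one_le_iff_ne_zero] using NeZero.ne n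
  obtain ⟨β, hβ, hβE⟩ := exists_compression_inverse_mem hl htrace hD T hminor
  obtain ⟨γ, hγ, hγD, hγE⟩ := exists_transverse_mem hn hl htrace hD hgram hj k
  have hunitl : IsUnit (diagonal l) := isUnit_diagonal.2 <| Pi.isUnit_iff.2 fun j =>
    Pi.isUnit_iff.2 fun i => (hl0 i j).isUnit
  have heigen (i : I) (j : Fin n) :
      evalRep P i (single j j 1 * diagonal l) = l j i • evalRep P i (single j j 1) := by
    have hmul : single j j 1 * diagonal l = single j j (l j) := by
      ext p q
      rw [mul_diagonal, single_apply, single_apply]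
      aesop
    rw [hmul, evalRep_single]
  obtain ⟨K, hK⟩ := exists_pow_forall_isFreePair hR (fun x hx => exists_norm_evalRep_le hx)
    completeOrthogonalIdempotents_single_diag (single_mem_integralMatrices hl htrace)
    hunitl hunit hD hβ hγ hβE hk (fun i => evalRep_single_ne_zero i k) hγD hγE heigen hl0
    hgap
  exact ⟨K, fun i => (hK i).of_map (leftMulCLM _).toRingHom.toMonoidHom⟩

end UniformSplitting

section ShortWords

open Matrix

variable {I : Type*} {n : ℕ}

/-- The nonempty words of length at most `4 * n + 3` which use at most three of four letters. -/
def shortWords (n : ℕ) : Set (List (Fin 4)) :=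
  {w | w ≠ [] ∧ w.length ≤ 4 * n + 3 ∧ ∃ m, m ∉ w}

lemma finite_shortWords (n : ℕ) : (shortWords n).Finite :=
  (List.finite_length_le (Fin 4) (4 * n + 3)).subset fun _ hw => hw.2.1

lemma singleton_mem_shortWords (n : ℕ) (a : Fin 4) : [a] ∈ shortWords n :=
  ⟨List.cons_ne_nil _ _, by simp, a + 1, by simp⟩

lemma replicate_append_mem_shortWords {u : List (Fin 4)} (hu : u.length ≤ 1) (a b a' b' : Fin n) :
    List.replicate a 0 ++ [1] ++ List.replicate b 0 ++ u ++
      (List.replicate a' 0 ++ [1] ++ List.replicate b' 0) ∈ shortWords n := by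
  refine ⟨by simp, by simp; omega, ?_⟩
  obtain ⟨m, hm⟩ : ∃ m : Fin 4, m ≠ 0 ∧ m ≠ 1 ∧ m ∉ u := by
    match u with
    | [] => exact ⟨2, by simp⟩
    | [c] => simp only [List.mem_singleton]; decide +revert
  exact ⟨m, by simp [hm]⟩

/-- The complexifications of a family of integral matrices, the `i`-th one conjugated by `Q i`. -/
noncomputable def changeBasis (Q : I → GL (Fin n) ℂ) :
    (I → GL (Fin n) ℤ) →* Matrix (Fin n) (Fin n) (I → ℂ) :=
  (piRingEquiv (β := fun _ : I => ℂ)).symm.toRingHom.toMonoidHom.comp <|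
    MonoidHom.pi fun i => (Units.coeHom _).comp <| (MulAut.conj (Q i)).toMonoidHom.comp <|
      (GeneralLinearGroup.map (Int.castRingHom ℂ)).comp (Pi.evalMonoidHom _ i)

variable {Q : I → GL (Fin n) ℂ}

lemma changeBasis_map (g : I → GL (Fin n) ℤ) (i : I) :
    (changeBasis Q g).map (Pi.evalRingHom (fun _ => ℂ) i) =
      (Q i).val * (g i).val.map (Int.castRingHom ℂ) * (Q i)⁻¹.val := rfl

lemma trace_changeBasis (g : I → GL (Fin n) ℤ) (i : I) :
    trace (changeBasis Q g) i = (trace (g i).val : ℤ) := by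
  have h := AddMonoidHom.map_trace (Pi.evalRingHom (fun _ => ℂ) i) (changeBasis Q g)
  rw [changeBasis_map, trace_units_conj] at h
  exact h.trans (AddMonoidHom.map_trace (Int.castRingHom ℂ) _).symm

lemma traceDet_changeBasis (g : I → GL (Fin n) ℤ) (i : I) :
    traceDet (changeBasis Q g) i = (traceDet (g i).val : ℤ) := by
  have h := traceDet_map (Pi.evalRingHom (fun _ => ℂ) i) (changeBasis Q g)
  rw [changeBasis_map, traceDet_units_conj, traceDet_map] at h
  exact h.symm

lemma gramDet_changeBasis (g h : I → GL (Fin n) ℤ) (i : I) :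
    gramDet (changeBasis Q g) (changeBasis Q h) i = (gramDet (g i).val (h i).val : ℤ) := by
  have H := gramDet_map (Pi.evalRingHom (fun _ => ℂ) i) (changeBasis Q g) (changeBasis Q h)
  rw [changeBasis_map, changeBasis_map, gramDet_units_conj, gramDet_map] at H
  exact H.symm

lemma minorDet_changeBasis (k : ℕ) (g h : I → GL (Fin n) ℤ) (i : I) :
    minorDet k (changeBasis Q g) (changeBasis Q h) i = (minorDet k (g i).val (h i).val : ℤ) := by
  have H := minorDet_map (Pi.evalRingHom (fun _ => ℂ) i) k (changeBasis Q g) (changeBasis Q h)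
  rw [changeBasis_map, changeBasis_map, minorDet_units_conj, minorDet_map] at H
  exact H.symm

lemma changeBasis_eq_diagonal {g : I → GL (Fin n) ℤ} {l : Fin n → I → ℂ}
    (h : ∀ i, (Q i).val * (g i).val.map (Int.castRingHom ℂ) * (Q i)⁻¹.val =
      diagonal fun j => l j i) : changeBasis Q g = diagonal l := by
  ext p q i
  have happly := congrFun₂ (h i) p q
  rw [← changeBasis_map, map_apply, Pi.evalRingHom_apply, diagonal_apply] at happly
  rw [happly, diagonal_apply]
  split_ifs <;> rfl

lemma isFreePair_of_changeBasis {g h : I → GL (Fin n) ℤ} {i : I}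
    (H : IsFreePair ((changeBasis Q g).map (Pi.evalRingHom (fun _ => ℂ) i))
      ((changeBasis Q h).map (Pi.evalRingHom (fun _ => ℂ) i))) : IsFreePair (g i) (h i) :=
  IsFreePair.of_map ((Units.coeHom _).comp <| (MulAut.conj (Q i)).toMonoidHom.comp <|
    GeneralLinearGroup.map (Int.castRingHom ℂ)) H

variable {R : I → ℝ} {hR : ∀ i, 2 ≤ R i}

lemma hasInverseIn_polyBounded_of_intCast {f : I → ℂ} {z : I → ℤ} (hf : ∀ i, f i = z i)
    (hz : ∀ i, z i ≠ 0) : HasInverseIn (polyBounded R hR) f :=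
  hasInverseIn_polyBounded_of_one_le_norm fun i => by
    rw [hf, Complex.norm_intCast]
    exact_mod_cast Int.one_le_abs (hz i)

lemma exists_changeBasis_mem_integralMatrices {x : Fin 4 → I → GL (Fin n) ℤ}
    (htrace : ∀ v ∈ shortWords n, ∀ i, (|trace ((v.map x).prod i).val| : ℤ) ≤ R i)
    (hgram : ∀ i, gramDet (x 0 i).val (x 1 i).val ≠ 0) :
    ∃ P, ∀ a, changeBasis Q (x a) ∈ integralMatrices (polyBounded R hR) P := by
  have hword {u : List (Fin 4)} (hu : u.length ≤ 1) (a b a' b' : Fin n) :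
      trace (changeBasis Q (x 0) ^ a.val * changeBasis Q (x 1) * changeBasis Q (x 0) ^ b.val *
        changeBasis Q (u.map x).prod * (changeBasis Q (x 0) ^ a'.val * changeBasis Q (x 1) *
          changeBasis Q (x 0) ^ b'.val)) ∈ polyBounded R hR := by
    refine ⟨1, fun i => ?_⟩
    simp only [← map_pow, ← map_mul]
    rw [trace_changeBasis, Complex.norm_intCast, pow_one, ← Int.cast_abs]
    simpa [mul_assoc] using htrace _ (replicate_append_mem_shortWords hu a b a' b') i
  obtain ⟨P, hP⟩ := exists_regularRep_mem_matrix (𝒪 := polyBounded R hR)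
    (hasInverseIn_polyBounded_of_intCast (gramDet_changeBasis (Q := Q) (x 0) (x 1)) hgram)
    (X := Set.range fun a => changeBasis Q (x a)) (by
      rintro y (rfl | ⟨c, rfl⟩) a b a' b'
      · simpa using hword (u := []) (by simp) a b a' b'
      · simpa using hword (u := [c]) (by simp) a b a' b')
  exact ⟨P, fun a => hP _ ⟨a, rfl⟩⟩

theorem exists_pow_forall_isFreePair_of_word [NeZero n] {x : Fin 4 → I → GL (Fin n) ℤ}
    (hR : ∀ i, 2 ≤ R i)
    (htrace : ∀ v ∈ shortWords n, ∀ i, (|trace ((v.map x).prod i).val| : ℤ) ≤ R i)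
    (hgram : ∀ i, gramDet (x 0 i).val (x 1 i).val ≠ 0) {w : List (Fin 4)} {m : Fin 4}
    (hpos : ∀ i, GeneralPosition ((w.map x).prod i).val (x m i).val) {l : Fin n → I → ℂ}
    (hdiag : changeBasis Q (w.map x).prod = diagonal l) {T : Finset (Fin n)} {j k : Fin n}
    (hj : j ∉ T) (hk : k ∈ T) {M : ℕ}
    (hgap : ∀ i, ∀ j ∉ T, ∀ k ∈ T, R i * ‖l j i‖ ^ M ≤ ‖l k i‖ ^ M) :
    ∃ K : ℕ, ∀ i, IsFreePair ((w.map x).prod i ^ K) (x m i * (w.map x).prod i ^ K) := by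
  obtain ⟨P, hP⟩ := exists_changeBasis_mem_integralMatrices (hR := hR) (Q := Q) htrace hgram
  have hunit : IsUnit (diagonal l) := by
    rw [← hdiag]
    exact (Group.isUnit _).map (changeBasis Q)
  have hl0 (i : I) (j : Fin n) : l j i ≠ 0 :=
    (Pi.isUnit_iff.1 (Pi.isUnit_iff.1 (isUnit_diagonal.1 hunit) j) i).ne_zero
  have hmem : diagonal l ∈ integralMatrices (polyBounded R hR) P := by
    rw [← hdiag, map_list_prod, List.map_map]
    exact list_prod_mem (List.forall_mem_map.2 fun a _ => hP a)
  have htraceDet : HasInverseIn (polyBounded R hR) (traceDet (diagonal l)) := by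
    rw [← hdiag]
    exact hasInverseIn_polyBounded_of_intCast (traceDet_changeBasis _)
      fun i => (hpos i).traceDet_ne_zero
  have hgramDet : HasInverseIn (polyBounded R hR) (gramDet (diagonal l) (changeBasis Q (x m))) := by
    rw [← hdiag]
    exact hasInverseIn_polyBounded_of_intCast (gramDet_changeBasis _ _)
      fun i => (hpos i).gramDet_ne_zero
  have hminorDet : HasInverseIn (polyBounded R hR)
      (minorDet T.card (diagonal l) (changeBasis Q (x m))) := by
    rw [← hdiag]
    exact hasInverseIn_polyBounded_of_intCast (minorDet_changeBasis _ _ _)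
      fun i => (hpos i).minorDet_ne_zero (by simpa using T.card_le_univ)
  obtain ⟨K, hK⟩ := exists_pow_forall_isFreePair_of_diagonal hmem (hP m)
    ((Group.isUnit (x m)).map (changeBasis Q)) hl0
    htraceDet hgramDet hminorDet hj hk hgap
  have hfree (i : I) := hK i
  simp only [← hdiag, ← map_pow, ← map_mul] at hfree
  exact ⟨K, fun i => isFreePair_of_changeBasis (hfree i)⟩

end ShortWords

section Diagonalisation

open Matrix Polynomial

variable {K : Type*} [Field K] {n : ℕ} {A : Matrix (Fin n) (Fin n) K}

lemma traceDet_eq_zero_of_trace_aeval_mul_pow {f : K[X]} (hf : f ≠ 0) (hdeg : f.natDegree < n)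
    (htrace : ∀ b, trace (aeval A f * A ^ b) = 0) : traceDet A = 0 := by
  refine exists_vecMul_eq_zero_iff.1 ⟨fun a : Fin n => f.coeff a, fun h0 => hf ?_, ?_⟩
  · ext k
    by_cases hk : k < n
    · exact congrFun h0 ⟨k, hk⟩
    · exact coeff_eq_zero_of_natDegree_lt (by omega)
  · ext b
    have hsum := htrace b
    simp only [aeval_eq_sum_range' hdeg, Finset.sum_mul, trace_sum, Finset.sum_range, smul_mul,
      trace_smul, ← pow_add, smul_eq_mul] at hsum
    exact hsum

-- If `charpoly A = q ^ 2 * g`, then `(q * g)(A) * A ^ b` is nilpotent by Cayley–Hamilton.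
lemma squarefree_charpoly_of_traceDet_ne_zero (h : traceDet A ≠ 0) : Squarefree A.charpoly := by
  rintro q ⟨g, hg⟩
  by_contra hq
  have hne : q * (q * g) ≠ 0 := by
    rw [← mul_assoc, ← hg]
    exact A.charpoly_monic.ne_zero
  have hq0 : q ≠ 0 := left_ne_zero_of_mul hne
  refine h (traceDet_eq_zero_of_trace_aeval_mul_pow (right_ne_zero_of_mul hne) ?_ fun b => ?_)
  · have hdeg : A.charpoly.natDegree = n := by simp
    rw [hg, mul_assoc, natDegree_mul hq0 (right_ne_zero_of_mul hne)] at hdeg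
    have := natDegree_pos_iff_degree_pos.2 (degree_pos_of_ne_zero_of_nonunit hq0 hq)
    omega
  · refine (isNilpotent_trace_of_isNilpotent ⟨2, ?_⟩).eq_zero
    have hsq : (q * g * X ^ b) ^ 2 = A.charpoly * (g * (X ^ b) ^ 2) := by rw [hg]; ring
    have hpow : A ^ b = aeval A (X ^ b : K[X]) := by simp
    rw [hpow, ← map_mul, ← map_pow, hsq, map_mul, aeval_self_charpoly, zero_mul]

lemma exists_injective_eigenvalues [IsAlgClosed K] (h : Squarefree A.charpoly) :
    ∃ l : Fin n → K, Function.Injective l ∧ ∀ j, ∃ v, v ≠ 0 ∧ A *ᵥ v = l j • v := by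
  classical
  have hcard : A.charpoly.roots.toFinset.card = n := by
    rw [Multiset.toFinset_card_of_nodup (nodup_roots (PerfectField.separable_iff_squarefree.2 h)),
      ← (IsAlgClosed.splits A.charpoly).natDegree_eq_card_roots]
    simp
  let e := (Finset.equivFinOfCardEq hcard).symm
  refine ⟨fun j => (e j).1, Subtype.val_injective.comp e.injective, fun j => ?_⟩
  have hroot : IsRoot A.charpoly (e j).1 := isRoot_of_mem_roots (Multiset.mem_toFinset.1 (e j).2)
  rw [IsRoot, eval_charpoly] at hroot
  obtain ⟨v, hv0, hv⟩ := exists_mulVec_eq_zero_iff.2 hroot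
  rw [sub_mulVec, sub_eq_zero] at hv
  exact ⟨v, hv0, by simp [← hv, scalar_apply]⟩

lemma exists_conj_eq_diagonal [IsAlgClosed K] (h : traceDet A ≠ 0) :
    ∃ (Q : GL (Fin n) K) (l : Fin n → K), Q.val * A * Q⁻¹.val = diagonal l := by
  obtain ⟨l, hl, hv⟩ := exists_injective_eigenvalues (squarefree_charpoly_of_traceDet_ne_zero h)
  choose v hv0 hv using hv
  have hli : LinearIndependent K v :=
    Module.End.eigenvectors_linearIndependent' (toLin' A) l hl v fun j =>
      ⟨Module.End.mem_eigenspace_iff.2 (by simpa using hv j), hv0 j⟩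
  obtain ⟨Q, hQ⟩ : IsUnit (of v)ᵀ := linearIndependent_cols_iff_isUnit.1 hli
  refine ⟨Q⁻¹, l, ?_⟩
  have hAQ : A * Q.val = Q.val * diagonal l := by
    rw [hQ]
    ext i j
    rw [mul_diagonal, mul_comm]
    exact congrFun (hv j) i
  rw [inv_inv, mul_assoc, hAQ, Units.inv_mul_cancel_left]

end Diagonalisation

section SpectralGap

variable {ι : Type*} [Fintype ι] {r : ι → ℝ}

lemma exists_card_eq_of_forall_lt_mul {ρ : ℝ} (hρ : 1 ≤ ρ) (hr : ∀ j, 0 ≤ r j)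
    (h : ∀ T : Finset ι, T.Nonempty → T ≠ Finset.univ → ∃ j ∉ T, ∃ k ∈ T, r k < ρ * r j) (M : ι)
    (s : ℕ) (hs : s < Fintype.card ι) :
    ∃ T : Finset ι, T.card = s + 1 ∧ ∀ k ∈ T, r M ≤ ρ ^ s * r k := by
  classical
  induction s with
  | zero => exact ⟨{M}, by simp⟩
  | succ s ih =>
    obtain ⟨T, hcard, hT⟩ := ih (Nat.lt_of_succ_lt hs)
    obtain ⟨j, hj, k, hk, hjk⟩ := h T (Finset.card_pos.1 (by omega)) (by
      rintro rfl
      rw [Finset.card_univ] at hcard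
      omega)
    refine ⟨insert j T, by rw [Finset.card_insert_of_notMem hj, hcard], fun i hi => ?_⟩
    obtain rfl | hi := Finset.mem_insert.1 hi
    · calc r M ≤ ρ ^ s * r k := hT k hk
        _ ≤ ρ ^ s * (ρ * r i) := by gcongr
        _ = ρ ^ (s + 1) * r i := by ring
    · refine (hT i hi).trans ?_
      have := hr i
      gcongr
      exact s.le_succ

lemma pow_card_le_of_sq_le_sum {ρ : ℝ} {M : ι} (hρ : 0 < ρ) (hM : ∀ j, r j ≤ r M) (hrM : 0 ≤ r M)
    (hcard : (Fintype.card ι : ℝ) ≤ ρ ^ Fintype.card ι)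
    (hsum : (ρ ^ Fintype.card ι) ^ 2 ≤ ∑ j, r j) : ρ ^ Fintype.card ι ≤ r M := by
  refine le_of_mul_le_mul_left ?_ (show 0 < ρ ^ Fintype.card ι by positivity)
  calc ρ ^ Fintype.card ι * ρ ^ Fintype.card ι = (ρ ^ Fintype.card ι) ^ 2 := (sq _).symm
    _ ≤ ∑ j, r j := hsum
    _ ≤ Fintype.card ι * r M :=
        (Finset.sum_le_card_nsmul _ r _ fun j _ => hM j).trans_eq (nsmul_eq_mul _ _)
    _ ≤ ρ ^ Fintype.card ι * r M := by gcongr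

-- Without a gap, all `r k` would be at least `ρ ^ (1 - n) * max r ≥ ρ`, where `n = card ι` and
-- `ρ = R ^ (1 / (2 * n))`, since `max r ≥ R / n ≥ √R = ρ ^ n`.
lemma exists_gap_of_prod_eq_one (hr : ∀ j, 0 < r j) (hprod : ∏ j, r j = 1) {R : ℝ} (hR : 1 < R)
    (hcard : (Fintype.card ι : ℝ) ^ 2 ≤ R) (hsum : R ≤ ∑ j, r j) :
    ∃ T : Finset ι, T.Nonempty ∧ T ≠ Finset.univ ∧
      ∀ j ∉ T, ∀ k ∈ T, R * r j ^ (2 * Fintype.card ι) ≤ r k ^ (2 * Fintype.card ι) := by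
  set n := Fintype.card ι
  have : Nonempty ι := by
    by_contra hempty
    rw [not_nonempty_iff] at hempty
    rw [Finset.univ_eq_empty, Finset.sum_empty] at hsum
    linarith
  have hn0 : 0 < n := Fintype.card_pos
  obtain ⟨M, hM⟩ := Finite.exists_max r
  obtain ⟨ρ, hρ0, hρ⟩ : ∃ ρ : ℝ, 0 ≤ ρ ∧ ρ ^ (2 * n) = R :=
    ⟨R ^ ((2 * n : ℕ) : ℝ)⁻¹, by positivity, Real.rpow_inv_natCast_pow (by linarith) (by omega)⟩
  have hρ1 : 1 < ρ := (one_lt_pow_iff_of_nonneg hρ0 (by omega)).1 (hρ ▸ hR)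
  have hsq : (ρ ^ n) ^ 2 = R := by rw [← pow_mul, mul_comm, hρ]
  have hMρ : ρ ^ n ≤ r M :=
    pow_card_le_of_sq_le_sum (by positivity) hM (hr M).le
      (le_of_sq_le_sq (hcard.trans_eq hsq.symm) (by positivity)) (hsq.trans_le hsum)
  by_contra! hgap
  have hstep (T : Finset ι) (hT : T.Nonempty) (hT' : T ≠ Finset.univ) :
      ∃ j ∉ T, ∃ k ∈ T, r k < ρ * r j := by
    obtain ⟨j, hj, k, hk, hjk⟩ := hgap T hT hT'
    rw [← hρ, ← mul_pow] at hjk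
    exact ⟨j, hj, k, hk, lt_of_pow_lt_pow_left₀ _ (mul_nonneg hρ0 (hr j).le) hjk⟩
  obtain ⟨T, hT, hTM⟩ := exists_card_eq_of_forall_lt_mul hρ1.le (fun j => (hr j).le) hstep M (n - 1)
    (by omega)
  obtain rfl : T = Finset.univ := Finset.eq_univ_of_card _ (by omega)
  have hlt (k : ι) : 1 < r k := by
    refine hρ1.trans_le (le_of_mul_le_mul_left ?_ (show 0 < ρ ^ (n - 1) by positivity))
    rw [pow_sub_one_mul hn0.ne']
    exact hMρ.trans (hTM k (Finset.mem_univ k))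
  have := Finset.prod_lt_prod_of_nonempty (fun _ _ => one_pos) (fun k _ => hlt k)
    Finset.univ_nonempty
  rw [hprod, Finset.prod_const_one] at this
  exact this.false

end SpectralGap

section GenericQuadruples

open Matrix

variable {n : ℕ}

/-- Four integral matrices for which every short word is in general position with respect to every
letter which does not occur in it. -/
structure IsGeneric (x : Fin 4 → GL (Fin n) ℤ) : Prop where
  generalPosition {w : List (Fin 4)} {m : Fin 4} (hw : w ∈ shortWords n) (hm : m ∉ w) :
    GeneralPosition (w.map x).prod.val (x m).val
  sq_le_abs_trace : (n : ℤ) ^ 2 ≤ |trace (x 0).val|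

/-- For generic matrices `x`, the word `w` has maximal trace among the short words, its value is
diagonalised by `Q`, and the eigenvalues `l` with index in `T` dominate the others. -/
structure IsDominantWord (w : List (Fin 4)) (T : Finset (Fin n)) (x : Fin 4 → GL (Fin n) ℤ)
    (Q : GL (Fin n) ℂ) (l : Fin n → ℂ) : Prop where
  isGeneric : IsGeneric x
  abs_trace_le {v : List (Fin 4)} (hv : v ∈ shortWords n) :
    |trace (v.map x).prod.val| ≤ |trace (w.map x).prod.val|
  conj_eq_diagonal : Q.val * (w.map x).prod.val.map (Int.castRingHom ℂ) * Q⁻¹.val = diagonal l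
  gap {j k : Fin n} (hj : j ∉ T) (hk : k ∈ T) :
    (|trace (w.map x).prod.val| : ℤ) * ‖l j‖ ^ (2 * n) ≤ ‖l k‖ ^ (2 * n)

variable {w : List (Fin 4)} {x : Fin 4 → GL (Fin n) ℤ}

lemma IsGeneric.sq_le_of_abs_trace_le (hx : IsGeneric x) {R : ℤ}
    (hR : ∀ v ∈ shortWords n, |trace (v.map x).prod.val| ≤ R) : (n : ℤ) ^ 2 ≤ R :=
  hx.sq_le_abs_trace.trans (by simpa using hR [0] (singleton_mem_shortWords n 0))

lemma exists_pow_forall_isFreePair_of_isDominantWord (hn : 2 ≤ n) (hw : w ∈ shortWords n)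
    {m : Fin 4} (hm : m ∉ w) {T : Finset (Fin n)} (hT : T.Nonempty) (hT' : T ≠ Finset.univ) :
    ∃ K : ℕ, ∀ x Q l, IsDominantWord w T x Q l →
      IsFreePair ((w.map x).prod ^ K) (x m * (w.map x).prod ^ K) := by
  have : NeZero n := ⟨by omega⟩
  obtain ⟨k, hk⟩ := hT
  obtain ⟨j, hj⟩ : ∃ j, j ∉ T := by simpa [Finset.eq_univ_iff_forall] using hT'
  let I := {d : (Fin 4 → GL (Fin n) ℤ) × GL (Fin n) ℂ × (Fin n → ℂ) //
    IsDominantWord w T d.1 d.2.1 d.2.2}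
  let y (a : Fin 4) (i : I) : GL (Fin n) ℤ := i.1.1 a
  have hprod (v : List (Fin 4)) (i : I) : (v.map y).prod i = (v.map i.1.1).prod := by
    exact (map_list_prod (Pi.evalMonoidHom (fun _ => GL (Fin n) ℤ) i) _).trans
      (by rw [List.map_map]; rfl)
  let R (i : I) : ℝ := (|trace (w.map i.1.1).prod.val| : ℤ)
  have hR (i : I) : 2 ≤ R i := by
    have hsq := i.2.isGeneric.sq_le_of_abs_trace_le fun v => i.2.abs_trace_le
    simp only [R]
    exact_mod_cast (show (2 : ℤ) ≤ n ^ 2 by nlinarith).trans hsq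
  have hdiag : changeBasis (fun i : I => i.1.2.1) (w.map y).prod = diagonal fun j i => i.1.2.2 j :=
    changeBasis_eq_diagonal fun i => by rw [hprod, i.2.conj_eq_diagonal]
  obtain ⟨K, hK⟩ := exists_pow_forall_isFreePair_of_word (x := y) hR
    (fun v hv i => by rw [hprod]; exact Int.cast_le.2 (i.2.abs_trace_le hv))
    (fun i => by
      simpa using (i.2.isGeneric.generalPosition (singleton_mem_shortWords n 0)
        (m := 1) (by simp)).gramDet_ne_zero)
    (fun i => by rw [hprod]; exact i.2.isGeneric.generalPosition hw hm) hdiag hj hk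
    (fun i j hj k hk => i.2.gap hj hk)
  refine ⟨K, fun x Q l h => ?_⟩
  have hfree := hK ⟨(x, Q, l), h⟩
  rwa [hprod] at hfree

lemma norm_prod_eq_one_of_conj_eq_diagonal {A : GL (Fin n) ℤ} {Q : GL (Fin n) ℂ} {l : Fin n → ℂ}
    (h : Q.val * A.val.map (Int.castRingHom ℂ) * Q⁻¹.val = diagonal l) : ∏ j, ‖l j‖ = 1 := by
  have hdet : (∏ j, l j) = A.val.det := by
    rw [← det_diagonal, ← h, det_units_conj]
    exact ((Int.castRingHom ℂ).map_det _).symm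
  have hA : |A.val.det| = 1 := Int.isUnit_iff_abs_eq.1 ((isUnit_iff_isUnit_det _).1 A.isUnit)
  rw [← norm_prod, hdet, Complex.norm_intCast, ← Int.cast_abs, hA, Int.cast_one]

lemma abs_trace_le_of_conj_eq_diagonal {A : GL (Fin n) ℤ} {Q : GL (Fin n) ℂ} {l : Fin n → ℂ}
    (h : Q.val * A.val.map (Int.castRingHom ℂ) * Q⁻¹.val = diagonal l) :
    (|trace A.val| : ℤ) ≤ ∑ j, ‖l j‖ := by
  have htrace : ∑ j, l j = trace A.val := by
    rw [← trace_diagonal, ← h, trace_units_conj]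
    exact (AddMonoidHom.map_trace (Int.castRingHom ℂ) _).symm
  rw [Int.cast_abs, ← Complex.norm_intCast, ← htrace]
  exact norm_sum_le _ _

lemma IsGeneric.exists_isDominantWord (hn : 2 ≤ n) (hx : IsGeneric x) :
    ∃ w ∈ shortWords n, ∃ T : Finset (Fin n), T.Nonempty ∧ T ≠ Finset.univ ∧
      ∃ Q l, IsDominantWord w T x Q l := by
  obtain ⟨w, hw, hmax⟩ := Set.exists_max_image (shortWords n)
    (fun w => |trace (w.map x).prod.val|) (finite_shortWords n) ⟨_, singleton_mem_shortWords n 0⟩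
  obtain ⟨m, hm⟩ := hw.2.2
  obtain ⟨Q, l, hQ⟩ := exists_conj_eq_diagonal
    (A := (w.map x).prod.val.map (Int.castRingHom ℂ)) (by
      rw [traceDet_map]
      exact Int.cast_ne_zero.2 (hx.generalPosition hw hm).traceDet_ne_zero)
  have hsq := hx.sq_le_of_abs_trace_le hmax
  have hprod := norm_prod_eq_one_of_conj_eq_diagonal hQ
  obtain ⟨T, hT, hT', hgap⟩ := exists_gap_of_prod_eq_one (r := fun j => ‖l j‖)
    (fun j => (norm_nonneg _).lt_of_ne fun h0 =>
      zero_ne_one ((Finset.prod_eq_zero (Finset.mem_univ j) h0.symm).symm.trans hprod))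
    hprod (R := (|trace (w.map x).prod.val| : ℤ))
    (by exact_mod_cast (show (1 : ℤ) < n ^ 2 by nlinarith).trans_le hsq)
    (by rw [Fintype.card_fin]; exact_mod_cast hsq) (abs_trace_le_of_conj_eq_diagonal hQ)
  rw [Fintype.card_fin] at hgap
  exact ⟨w, hw, T, hT, hT', Q, l, hx, fun hv => hmax _ hv, hQ, fun hj hk => hgap _ hj _ hk⟩

theorem exists_forall_isGeneric_isFreePair_pow (hn : 2 ≤ n) :
    ∃ N : ℕ, ∀ x : Fin 4 → GL (Fin n) ℤ, IsGeneric x →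
      ∃ w ∈ shortWords n, ∃ m, ∃ K ≤ N, IsFreePair ((w.map x).prod ^ K)
        (x m * (w.map x).prod ^ K) := by
  have hK (d : shortWords n × Finset (Fin n)) : ∃ K : ℕ, ∃ m, d.2.Nonempty → d.2 ≠ Finset.univ →
      ∀ x Q l, IsDominantWord d.1 d.2 x Q l →
        IsFreePair ((d.1.1.map x).prod ^ K) (x m * (d.1.1.map x).prod ^ K) := by
    obtain ⟨⟨w, hw⟩, T⟩ := d
    obtain ⟨m, hm⟩ := hw.2.2
    by_cases h : T.Nonempty ∧ T ≠ Finset.univ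
    · obtain ⟨K, hK⟩ := exists_pow_forall_isFreePair_of_isDominantWord hn hw hm h.1 h.2
      exact ⟨K, m, fun _ _ => hK⟩
    · exact ⟨0, m, fun h1 h2 => (h ⟨h1, h2⟩).elim⟩
  choose K m hK using hK
  have := (finite_shortWords n).to_subtype
  obtain ⟨N, hN⟩ := Finite.bddAbove_range K
  refine ⟨N, fun x hx => ?_⟩
  obtain ⟨w, hw, T, hT, hT', Q, l, h⟩ := hx.exists_isDominantWord hn
  exact ⟨w, hw, m (⟨w, hw⟩, T), K (⟨w, hw⟩, T), hN ⟨_, rfl⟩, hK (⟨w, hw⟩, T) hT hT' x Q l h⟩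

end GenericQuadruples

section StrongApproximation

open Matrix

variable {ι : Type*} [Fintype ι] [DecidableEq ι]

-- The two triples multiply to `!![0, c; -c⁻¹, 0]` and `!![0, -1; 1, 0]` in rows `i` and `j`.
lemma diag2n_eq_mul_transvection {K : Type*} [Field K] {i j : ι} (hij : i ≠ j) {c : K}
    (hc : c ≠ 0) :
    SpecialLinearGroup.diag2n hij c hc =
      .transvection hij c * .transvection hij.symm (-c⁻¹) * .transvection hij c *
        (.transvection hij (-1) * .transvection hij.symm 1 * .transvection hij (-1)) := by
  apply SpecialLinearGroup.coeMonoidHom_injective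
  simp only [map_mul, SpecialLinearGroup.coeMonoidHom_apply, SpecialLinearGroup.diag2n_coe,
    SpecialLinearGroup.transvection_coe, mul_add, add_mul, mul_one, one_mul,
    single_mul_single_same, single_mul_single_of_ne, hij, hij.symm, Ne, not_false_eq_true, add_zero]
  ext a b
  simp only [diagonal_apply, Matrix.add_apply, one_apply, single_apply]
  grind

lemma specialLinearGroup_map_transvection {R S : Type*} [CommRing R] [CommRing S] (φ : R →+* S)
    {i j : ι} (hij : i ≠ j) (c : R) :
    SpecialLinearGroup.map φ (.transvection hij c) = .transvection hij (φ c) := by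
  ext a b
  simp [SpecialLinearGroup.transvection_coe, one_apply, single_apply, apply_ite φ]

variable [Nontrivial ι] {κ : Type*}

theorem surjective_specialLinearGroup_map_pi [Finite κ] {R : Type*} [CommRing R] {K : κ → Type*}
    [∀ k, Field (K k)] (φ : ∀ k, R →+* K k) (hφ : Function.Surjective (RingHom.pi φ)) :
    Function.Surjective (MonoidHom.pi fun k => SpecialLinearGroup.map (n := ι) (φ k)) := by
  classical
  rw [← MonoidHom.range_eq_top, eq_top_iff]
  refine fun h _ => Subgroup.pi_mem_of_mulSingle_mem h fun k => ?_
  let Lifts (g : SpecialLinearGroup ι (K k)) : Prop :=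
    Pi.mulSingle k g ∈ (MonoidHom.pi fun k => SpecialLinearGroup.map (n := ι) (φ k)).range
  have hmul (g g' : SpecialLinearGroup ι (K k)) (hg : Lifts g) (hg' : Lifts g') :
      Lifts (g * g') := by
    simp only [Lifts, Pi.mulSingle_mul]
    exact mul_mem hg hg'
  have htransvection (i j : ι) (hij : i ≠ j) (c : K k) : Lifts (.transvection hij c) := by
    obtain ⟨r, hr⟩ := hφ (Pi.single k c)
    have hr' (l : κ) : φ l r = (Pi.single k c : ∀ l, K l) l := congrFun hr l
    refine ⟨.transvection hij r, funext fun l => ?_⟩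
    rw [MonoidHom.pi_apply, specialLinearGroup_map_transvection, hr']
    obtain rfl | hl := eq_or_ne l k <;> simp [*]
  refine SpecialLinearGroup.diagonal_transvection_induction' Lifts (h k)
    (fun i j hij c hc => ?_) htransvection hmul
  rw [diag2n_eq_mul_transvection]
  exact hmul _ _ (hmul _ _ (hmul _ _ (htransvection ..) (htransvection ..)) (htransvection ..))
    (hmul _ _ (hmul _ _ (htransvection ..) (htransvection ..)) (htransvection ..))

lemma surjective_pi_intCastRingHom [Finite κ] {p : κ → ℕ}
    (hp : Pairwise (Function.onFun Nat.Coprime p)) :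
    Function.Surjective (RingHom.pi fun k => Int.castRingHom (ZMod (p k))) := by
  have := Fintype.ofFinite κ
  intro y
  obtain ⟨z, hz⟩ := ZMod.intCast_surjective ((ZMod.prodEquivPi p hp).symm y)
  refine ⟨z, ?_⟩
  rw [← (ZMod.prodEquivPi p hp).apply_symm_apply y, ← hz]
  simp only [eq_intCast, map_intCast]

end StrongApproximation

section TargetMatrix

open Matrix

variable {n : ℕ}

/-- The unitriangular matrix whose off-diagonal entries are `n` in the column `0` and vanish in the
other columns. -/
def columnMatrix (n : ℕ) [NeZero n] : Matrix (Fin n) (Fin n) ℤ :=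
  fun i j => if i = j then 1 else if j = 0 then n else 0

section

variable [NeZero n]

lemma columnMatrix_nonneg (i j : Fin n) : 0 ≤ columnMatrix n i j := by
  unfold columnMatrix
  split_ifs <;> simp

lemma columnMatrix_zero_pos (i : Fin n) : 0 < columnMatrix n i 0 := by
  unfold columnMatrix
  split_ifs with h h0
  · exact one_pos
  · exact_mod_cast NeZero.pos n
  · exact absurd rfl h0

lemma det_columnMatrix : (columnMatrix n).det = 1 := by
  rw [det_of_isLowerTriangular]
  · simp [columnMatrix]
  · intro i j (hij : i < j)
    simp [columnMatrix, hij.ne, ((Fin.zero_le i).trans_lt hij).ne']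

/-- A positive definite integral matrix of determinant one with positive entries and large trace. -/
def targetMatrix (n : ℕ) [NeZero n] : Matrix (Fin n) (Fin n) ℤ :=
  columnMatrix n * (columnMatrix n)ᵀ

lemma det_targetMatrix : (targetMatrix n).det = 1 := by
  simp [targetMatrix, det_columnMatrix]

lemma targetMatrix_pos (i j : Fin n) : 0 < targetMatrix n i j :=
  Finset.sum_pos' (fun k _ => mul_nonneg (columnMatrix_nonneg i k) (columnMatrix_nonneg j k))
    ⟨0, Finset.mem_univ _, mul_pos (columnMatrix_zero_pos i) (columnMatrix_zero_pos j)⟩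

lemma sq_le_trace_targetMatrix (hn : 2 ≤ n) : (n : ℤ) ^ 2 ≤ (targetMatrix n).trace := by
  have hone : (⟨1, hn⟩ : Fin n) ≠ 0 := by simp [Fin.ext_iff]
  calc (n : ℤ) ^ 2 = columnMatrix n ⟨1, hn⟩ 0 * columnMatrix n ⟨1, hn⟩ 0 := by
        simp [columnMatrix, hone, sq]
    _ ≤ targetMatrix n ⟨1, hn⟩ ⟨1, hn⟩ := Finset.single_le_sum
        (f := fun k => columnMatrix n ⟨1, hn⟩ k * columnMatrix n ⟨1, hn⟩ k)
        (fun k _ => mul_self_nonneg _) (Finset.mem_univ 0)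
    _ ≤ (targetMatrix n).trace := Finset.single_le_sum (f := fun k => targetMatrix n k k)
        (fun k _ => (targetMatrix_pos k k).le) (Finset.mem_univ _)

end

lemma det_submatrix_mul_transpose_pos {m : Type*} [Fintype m] [DecidableEq m] {P : Matrix m m ℤ}
    (hP : P.det ≠ 0) (s : Finset m) :
    0 < ((P * Pᵀ).submatrix (Subtype.val : s → m) Subtype.val).det := by
  let ι := Int.castRingHom ℝ
  have hunit : IsUnit (P.map ι) := by
    rw [isUnit_iff_isUnit_det, isUnit_iff_ne_zero, ← RingHom.mapMatrix_apply, ← ι.map_det]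
    exact Int.cast_ne_zero.2 hP
  have hpos := ((PosDef.mul_conjTranspose_self _ (vecMul_injective_of_isUnit hunit)).submatrix
    (e := (Subtype.val : s → m)) Subtype.val_injective).det_pos
  have hmap : (P.map ι * (P.map ι)ᴴ) = (P * Pᵀ).map ι := by
    rw [Matrix.map_mul, conjTranspose_eq_transpose_of_trivial, transpose_map]
  rw [hmap, submatrix_map, ← RingHom.mapMatrix_apply, ← ι.map_det] at hpos
  exact Int.cast_pos.1 hpos

end TargetMatrix

section DyadicSpectrum

variable {n : ℕ} {K : Type*} [Field K]

/-- Powers of two, scaled so as to have product one. -/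
def dyadicSpectrum (K : Type*) [Field K] (n : ℕ) (i : Fin n) : K :=
  2 ^ (n * 2 ^ (i : ℕ)) / 2 ^ ∑ j : Fin n, 2 ^ (j : ℕ)

lemma prod_dyadicSpectrum_pow (s : Finset (Fin n)) (k : ℕ) :
    ∏ i ∈ s, dyadicSpectrum K n i ^ k =
      2 ^ (n * (∑ i ∈ s, 2 ^ (i : ℕ)) * k) / 2 ^ ((∑ j : Fin n, 2 ^ (j : ℕ)) * s.card * k) := by
  simp_rw [Finset.prod_pow, dyadicSpectrum, Finset.prod_div_distrib, Finset.prod_const,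
    Finset.prod_pow_eq_pow_sum, ← Finset.mul_sum, div_pow, ← pow_mul]

lemma prod_dyadicSpectrum (h2 : (2 : K) ≠ 0) : ∏ i, dyadicSpectrum K n i = 1 := by
  have h := prod_dyadicSpectrum_pow (K := K) (Finset.univ : Finset (Fin n)) 1
  rw [Finset.card_univ, Fintype.card_fin, mul_comm n, div_self (pow_ne_zero _ h2)] at h
  simpa only [pow_one] using h

lemma sum_two_pow_injective :
    Function.Injective fun s : Finset (Fin n) => ∑ i ∈ s, 2 ^ (i : ℕ) := fun s t h =>
  Finset.map_injective Fin.valEmbedding (Finset.geomSum_injective le_rfl (by simpa using h))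

lemma eq_of_prod_dyadicSpectrum_pow_eq (h2 : (2 : K) ≠ 0) {k : ℕ}
    (hpow : ∀ s t : Finset (Fin n), s ≠ t →
      (2 : K) ^ (n * (∑ i ∈ s, 2 ^ (i : ℕ)) * k) ≠ 2 ^ (n * (∑ i ∈ t, 2 ^ (i : ℕ)) * k))
    {s t : Finset (Fin n)} (hcard : s.card = t.card)
    (h : ∏ i ∈ s, dyadicSpectrum K n i ^ k = ∏ i ∈ t, dyadicSpectrum K n i ^ k) : s = t := by
  rw [prod_dyadicSpectrum_pow, prod_dyadicSpectrum_pow, hcard,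
    div_left_inj' (pow_ne_zero _ h2)] at h
  exact by_contra fun hst => hpow s t hst h

end DyadicSpectrum

section LargePrimes

open Matrix

variable {n : ℕ}

lemma eventually_abs_le_of_intCast_eq (a : ℤ) :
    ∀ᶠ p : ℕ in atTop, ∀ z : ℤ, (z : ZMod p) = a → |a| ≤ |z| := by
  filter_upwards [eventually_ge_atTop (2 * a.natAbs)] with p hp z hz
  by_contra! hlt
  have hdvd : (p : ℤ) ∣ z - a :=
    (ZMod.intCast_zmod_eq_zero_iff_dvd _ _).1 (by rw [Int.cast_sub, hz, sub_self])
  have habs : |z - a| < p := by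
    have := abs_sub z a
    have := Int.abs_eq_natAbs a
    omega
  have := Int.eq_zero_of_abs_lt_dvd hdvd habs
  exact hlt.ne (by rw [sub_eq_zero.1 this])

lemma eventually_intCast_ne_zero {a : ℤ} (ha : a ≠ 0) :
    ∀ᶠ p : ℕ in atTop, (a : ZMod p) ≠ 0 := by
  filter_upwards [eventually_abs_le_of_intCast_eq a] with p hp h0
  exact ha (abs_nonpos_iff.1 (by simpa using hp 0 (by simp [h0])))

lemma eventually_two_pow_ne_two_pow {a b : ℕ} (hab : a ≠ b) :
    ∀ᶠ p : ℕ in atTop, (2 : ZMod p) ^ a ≠ 2 ^ b := by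
  have hne : (2 ^ a - 2 ^ b : ℤ) ≠ 0 := sub_ne_zero.2 fun h =>
    hab (Nat.pow_right_injective le_rfl (by exact_mod_cast h))
  filter_upwards [eventually_intCast_ne_zero hne] with p hp h
  exact hp (by push_cast; exact sub_eq_zero.2 h)

lemma eventually_generalPosition_diagonal_pow (hn : n ≠ 0) {D : Matrix (Fin n) (Fin n) ℤ}
    (hD : ∀ i j, D i j ≠ 0)
    (hminor : ∀ s : Finset (Fin n), (D.submatrix (Subtype.val : s → Fin n) Subtype.val).det ≠ 0)
    {k : ℕ} (hk : k ≠ 0) :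
    ∀ᶠ p : ℕ in atTop, ∀ [Fact p.Prime], GeneralPosition
      (diagonal (dyadicSpectrum (ZMod p) n) ^ k) (D.map (Int.castRingHom (ZMod p))) := by
  have hentry : ∀ᶠ p : ℕ in atTop, ∀ i j, ((D i j : ℤ) : ZMod p) ≠ 0 :=
    eventually_all.2 fun i => eventually_all.2 fun j => eventually_intCast_ne_zero (hD i j)
  have hminor' : ∀ᶠ p : ℕ in atTop, ∀ s : Finset (Fin n),
      ((D.submatrix (Subtype.val : s → Fin n) Subtype.val).det : ZMod p) ≠ 0 :=
    eventually_all.2 fun s => eventually_intCast_ne_zero (hminor s)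
  have hpow : ∀ᶠ p : ℕ in atTop, ∀ s t : Finset (Fin n), s ≠ t →
      (2 : ZMod p) ^ (n * (∑ i ∈ s, 2 ^ (i : ℕ)) * k) ≠ 2 ^ (n * (∑ i ∈ t, 2 ^ (i : ℕ)) * k) :=
    eventually_all.2 fun s => eventually_all.2 fun t => eventually_imp_distrib_left.2 fun hst =>
      eventually_two_pow_ne_two_pow fun h => hst <| sum_two_pow_injective <|
        Nat.eq_of_mul_eq_mul_left hn.bot_lt (Nat.eq_of_mul_eq_mul_right hk.bot_lt h)
  filter_upwards [hentry, hminor', hpow, eventually_intCast_ne_zero two_ne_zero]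
    with p hentry hminor' hpow h2 _
  rw [diagonal_pow]
  refine .of_diagonal (fun s t => eq_of_prod_dyadicSpectrum_pow_eq (by exact_mod_cast h2) hpow)
    hentry fun s => ?_
  rw [submatrix_map, ← RingHom.mapMatrix_apply, ← RingHom.map_det]
  exact hminor' s

lemma exists_injective_prime_of_eventually {P : ℕ → Prop} (hP : ∀ᶠ p in atTop, P p) (κ : Type*)
    [Finite κ] : ∃ p : κ → ℕ, Function.Injective p ∧ ∀ k, (p k).Prime ∧ P (p k) := by
  have hinf : {p | p.Prime ∧ P p}.Infinite := Nat.frequently_atTop_iff_infinite.1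
    ((Nat.frequently_atTop_iff_infinite.2 Nat.infinite_setOfPred_prime).and_eventually hP)
  obtain ⟨m, ⟨f⟩⟩ := Finite.exists_equiv_fin κ
  exact ⟨fun k => hinf.natEmbedding _ (f k), fun a b h => f.injective <|
    Fin.val_injective <| (hinf.natEmbedding _).injective <| Subtype.ext h,
    fun k => (hinf.natEmbedding _ (f k)).2⟩

end LargePrimes

section GenericResidues

open Matrix

variable {n : ℕ}

lemma list_prod_map_eq_pow_length {R : Type*} [CommRing R] (φ : ℤ →+* R) {κ : Type*}
    {x : κ → GL (Fin n) ℤ} {w : List κ} {E : Matrix (Fin n) (Fin n) R}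
    (h : ∀ a ∈ w, (x a).val.map φ = E) : (w.map x).prod.val.map φ = E ^ w.length := by
  let f : GL (Fin n) ℤ →* Matrix (Fin n) (Fin n) R :=
    φ.mapMatrix.toMonoidHom.comp (Units.coeHom _)
  have hf : ∀ A ∈ (w.map x).map f, A = E := by simpa [f] using h
  simpa [f] using (map_list_prod f (w.map x)).trans (List.prod_eq_pow_card _ E hf)

lemma IsGeneric.of_map_eq {p : Fin 4 → ℕ} {E : ∀ k, Matrix (Fin n) (Fin n) (ZMod (p k))}
    {D : Matrix (Fin n) (Fin n) ℤ}
    (hgen : ∀ m, ∀ k ∈ Set.Icc 1 (4 * n + 3),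
      GeneralPosition (E m ^ k) (D.map (Int.castRingHom (ZMod (p m)))))
    (habs : ∀ z : ℤ, (z : ZMod (p 0)) = D.trace → |D.trace| ≤ |z|)
    (htrace : (n : ℤ) ^ 2 ≤ D.trace) {x : Fin 4 → GL (Fin n) ℤ}
    (hx : ∀ m, (x m).val.map (Int.castRingHom (ZMod (p m))) = D.map (Int.castRingHom _))
    (hx' : ∀ m, ∀ l ≠ m, (x l).val.map (Int.castRingHom (ZMod (p m))) = E m) :
    IsGeneric x where
  generalPosition {w m} hw hm := by
    apply GeneralPosition.of_map (Int.castRingHom (ZMod (p m)))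
    rw [hx, list_prod_map_eq_pow_length _ fun a ha => hx' m a (ne_of_mem_of_not_mem ha hm)]
    exact hgen m _ ⟨List.length_pos_iff.2 hw.1, hw.2.1⟩
  sq_le_abs_trace := by
    refine htrace.trans ((le_abs_self _).trans (habs _ ?_))
    have h := congrArg trace (hx 0)
    have hcast (A : Matrix (Fin n) (Fin n) ℤ) :=
      AddMonoidHom.map_trace (Int.castRingHom (ZMod (p 0))) A
    exact (hcast _).trans (h.trans (hcast _).symm)

lemma exists_generalLinearGroup_map_eq {κ : Type*} [Finite κ] {p : κ → ℕ} [∀ k, Fact (p k).Prime]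
    (hp : Function.Injective p) (hn : 2 ≤ n) (h : ∀ k, Matrix (Fin n) (Fin n) (ZMod (p k)))
    (hdet : ∀ k, (h k).det = 1) :
    ∃ t : GL (Fin n) ℤ, ∀ k, t.val.map (Int.castRingHom (ZMod (p k))) = h k := by
  have : Nontrivial (Fin n) := Fin.nontrivial_iff_two_le.2 hn
  obtain ⟨t, ht⟩ := surjective_specialLinearGroup_map_pi (ι := Fin n) _
    (surjective_pi_intCastRingHom fun j k hjk =>
      (Nat.coprime_primes Fact.out Fact.out).2 (hp.ne hjk)) fun k => ⟨h k, hdet k⟩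
  exact ⟨t, fun k => congrArg Subtype.val (congrFun ht k)⟩

theorem exists_finite_quotient_isGeneric (hn : 2 ≤ n) :
    ∃ (Q : Type) (_ : Group Q) (_ : Finite Q) (ψ : GL (Fin n) ℤ →* Q) (t : Fin 4 → GL (Fin n) ℤ),
      ∀ x : Fin 4 → GL (Fin n) ℤ, (∀ l, ψ (x l) = ψ (t l)) → IsGeneric x := by
  have : NeZero n := ⟨by omega⟩
  let D := targetMatrix n
  have hgen : ∀ᶠ p : ℕ in atTop, ∀ k ∈ Set.Icc 1 (4 * n + 3), ∀ [Fact p.Prime], GeneralPosition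
      (diagonal (dyadicSpectrum (ZMod p) n) ^ k) (D.map (Int.castRingHom (ZMod p))) :=
    (eventually_all_finite (Set.finite_Icc _ _)).2 fun k hk =>
      eventually_generalPosition_diagonal_pow (NeZero.ne n) (fun i j => (targetMatrix_pos i j).ne')
        (fun s => (det_submatrix_mul_transpose_pos (by simp [det_columnMatrix]) s).ne')
        (Nat.one_le_iff_ne_zero.1 hk.1)
  obtain ⟨p, hinj, hp⟩ := exists_injective_prime_of_eventually (hgen.and <|
    (eventually_abs_le_of_intCast_eq D.trace).and (eventually_intCast_ne_zero two_ne_zero)) (Fin 4)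
  have (k : Fin 4) : Fact (p k).Prime := ⟨(hp k).1⟩
  have hlift (l : Fin 4) := exists_generalLinearGroup_map_eq hinj hn
    (fun k => if k = l then D.map (Int.castRingHom (ZMod (p k)))
      else diagonal (dyadicSpectrum (ZMod (p k)) n)) fun k => by
    split_ifs
    · rw [← RingHom.mapMatrix_apply, ← RingHom.map_det, det_targetMatrix, map_one]
    · rw [det_diagonal, prod_dyadicSpectrum (by exact_mod_cast (hp k).2.2.2)]
  choose t ht using hlift
  refine ⟨∀ k, GL (Fin n) (ZMod (p k)), inferInstance, inferInstance,
    MonoidHom.pi fun k => GeneralLinearGroup.map (Int.castRingHom (ZMod (p k))), t, fun x hx => ?_⟩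
  have hxt (l k : Fin 4) := (congrArg Units.val (congrFun (hx l) k)).trans (ht l k)
  exact .of_map_eq (fun m k hk => (hp m).2.1 k hk) (hp 0).2.2.1 (sq_le_trace_targetMatrix hn)
    (fun m => (hxt m m).trans (if_pos rfl)) fun m l hl => (hxt l m).trans (if_neg hl.symm)

end GenericResidues

section UniformGrowth

variable {H : Type*} [Group H] {n : ℕ}

theorem exists_isFreePair_mem_wordBall (hn : 2 ≤ n) {ρ : H →* GL (Fin n) ℤ}
    (hρ : Function.Surjective ρ) :
    ∃ ℓ > 0, ∀ S : Set H, Subgroup.closure S = ⊤ →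
      ∃ a ∈ wordBall S ℓ, ∃ b ∈ wordBall S ℓ, IsFreePair a b := by
  obtain ⟨Q, _, _, ψ, t, hgeneric⟩ := exists_finite_quotient_isGeneric hn
  obtain ⟨k, hk⟩ := exists_forall_mem_wordBall_map_eq (ψ.comp ρ)
  obtain ⟨N, hN⟩ := exists_forall_isGeneric_isFreePair_pow hn
  refine ⟨k + k * (4 * n + 3) * N + 1, by omega, fun S hS => ?_⟩
  have hlift (i : Fin 4) : ∃ g ∈ wordBall S k, ψ (ρ g) = ψ (t i) := by
    obtain ⟨h, hh⟩ := hρ (t i)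
    simpa [hh] using hk S hS h
  choose g hgball hgt using hlift
  obtain ⟨w, ⟨-, hlength, -⟩, m, K, hKN, hfree⟩ := hN (fun i => ρ (g i)) (hgeneric _ hgt)
  have hwmem : (w.map g).prod ∈ wordBall S (k * (4 * n + 3)) := by
    refine wordBall_mono S (Nat.mul_le_mul_left k ?_)
      (list_prod_mem_wordBall (List.forall_mem_map.2 fun i _ => hgball i))
    rwa [List.length_map]
  have hpow : (w.map g).prod ^ K ∈ wordBall S (k * (4 * n + 3) * N) :=
    wordBall_mono S (Nat.mul_le_mul_left _ hKN) (pow_mem_wordBall_mul hwmem K)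
  refine ⟨(w.map g).prod ^ K, wordBall_mono S (by omega) hpow,
    g m * (w.map g).prod ^ K,
    wordBall_mono S (by omega) (mul_mem_wordBall_add (hgball m) hpow), .of_map ρ ?_⟩
  simpa only [map_mul, map_pow, map_list_prod, List.map_map, Function.comp_def] using hfree

end UniformGrowth

/-- a finitely generated group surjecting onto `GL(n,ℤ)`, `n ≥ 2`, has
uniformly exponential growth. -/
theorem uniform_growth_of_surjection_onto_glnz {G : Type*} [Group G]
    (hG : Group.FG G) (n : ℕ) (hn : 2 ≤ n)
    (ρ : G →* GL (Fin n) ℤ) (hρ : Function.Surjective ρ) :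
    1 < minGrowth G := by
  obtain ⟨ℓ, hℓ, hfree⟩ := exists_isFreePair_mem_wordBall hn hρ
  obtain ⟨S₀, hS₀⟩ := Group.fg_def.1 hG
  have hbound : (2 : ℝ) ^ (ℓ : ℝ)⁻¹ ≤ minGrowth G := by
    refine le_csInf ⟨_, S₀, hS₀, rfl⟩ ?_
    rintro _ ⟨S, hS, rfl⟩
    obtain ⟨a, ha, b, hb, hab⟩ := hfree S hS
    exact hab.two_rpow_inv_le_growthRate S.finite_toSet hS hℓ ha hb
  exact (Real.one_lt_rpow one_lt_two (by positivity)).trans_le hbound
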